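/- arXiv:2601.11274 — 2 statements merged into one kernel-verified Lean document; each statement's English description precedes it below -/
import Mathlib

section
/- Let {ν_n}_{n≥1} be a sequence of parametric b-measures on ℝ^N with respect to {ω_j}_{j≥1} admitting, for each j ≥ 1, m-bounds {m_j^n}_{n≥1} that form an equicontinuous family (for every ε > 0 there is δ > 0 with m_j^n([s,t]) < ε whenever 0 ≤ t−s < δ, for all n) and l-bounds {l_j^n}_{n≥1} that form a bounded family (there is c_j > 0 with l_j^n([t,t+1]) ≤ c_j for all t ∈ ℝ and n). Then there exist a subsequence {ν_{n_k}}_{k≥1} and a parametric b-measure ν on ℝ^N with respect to {ω_j}_{j≥1} such that (ν_{n_k})_y(I) → ν_y(I) as k → ∞, for every y ∈ ℝ^N and every compact interval I ⊂ ℝ. -/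
open MeasureTheory Set Filter Topology

/-- A (continuous real) b-measure: a set function on the bounded Borel subsets of `ℝ`
which vanishes on `∅`, is countably additive over countable pairwise disjoint families
of bounded Borel sets with bounded union, and vanishes on singletons. -/
structure IsBMeasure (μ : Set ℝ → ℝ) : Prop where
  empty : μ ∅ = 0
  countably_additive : ∀ A : ℕ → Set ℝ, (∀ n, MeasurableSet (A n)) →
    (∀ n, Bornology.IsBounded (A n)) → Pairwise (Function.onFun Disjoint A) →
    Bornology.IsBounded (⋃ n, A n) →
    HasSum (fun n => μ (A n)) (μ (⋃ n, A n))
  singleton : ∀ t : ℝ, μ {t} = 0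

/-- A locally finite atomless Borel measure on `ℝ`. -/
def GoodMeasure (m : Measure ℝ) : Prop :=
  IsLocallyFiniteMeasure m ∧ ∀ t : ℝ, m {t} = 0

/-- `P` is a finite Borel partition of `A`. -/
def IsBorelPartition (A : Set ℝ) {n : ℕ} (P : Fin n → Set ℝ) : Prop :=
  (∀ i, MeasurableSet (P i)) ∧ Pairwise (Function.onFun Disjoint P) ∧ (⋃ i, P i) = A

/-- `|μ| ≤ m` : total-variation bound of the set function `μ` by the measure `m`,
expressed through finite Borel partitions of bounded Borel sets. -/
def TVLE (μ : Set ℝ → ℝ) (m : Measure ℝ) : Prop :=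
  ∀ A : Set ℝ, Bornology.IsBounded A → MeasurableSet A →
    ∀ (n : ℕ) (P : Fin n → Set ℝ), IsBorelPartition A P →
      ∑ i, |μ (P i)| ≤ (m A).toReal

/-- Partition-sum bound `Σ |μ₁(Aᵢ) - μ₂(Aᵢ)| ≤ c · l(A)` for the difference of two
set functions, over finite Borel partitions of bounded Borel sets. -/
def DiffLE (μ₁ μ₂ : Set ℝ → ℝ) (c : ℝ) (l : Measure ℝ) : Prop :=
  ∀ A : Set ℝ, Bornology.IsBounded A → MeasurableSet A →
    ∀ (n : ℕ) (P : Fin n → Set ℝ), IsBorelPartition A P →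
      ∑ i, |μ₁ (P i) - μ₂ (P i)| ≤ c * (l A).toReal

variable {E : Type*} [NormedAddCommGroup E]

/-- `m` is an m-bound of `ν` on the closed ball of radius `j`. -/
def HasMBound (ν : E → Set ℝ → ℝ) (j : ℕ) (m : Measure ℝ) : Prop :=
  GoodMeasure m ∧ ∀ y : E, ‖y‖ ≤ (j : ℝ) → TVLE (ν y) m

/-- `l` is an l-bound of `ν` on the closed ball of radius `j`, for the modulus `ω`. -/
def HasLBound (ω : ℝ → ℝ) (ν : E → Set ℝ → ℝ) (j : ℕ) (l : Measure ℝ) : Prop :=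
  GoodMeasure l ∧ ∀ y₁ y₂ : E, ‖y₁‖ ≤ (j : ℝ) → ‖y₂‖ ≤ (j : ℝ) →
    DiffLE (ν y₁) (ν y₂) (ω ‖y₁ - y₂‖) l

/-- A non-decreasing family of moduli of continuity `{ω_j}`. -/
structure IsModulusFamily (ω : ℕ → ℝ → ℝ) : Prop where
  continuousOn : ∀ j, ContinuousOn (ω j) (Ici 0)
  monotoneOn : ∀ j, MonotoneOn (ω j) (Ici 0)
  map_zero : ∀ j, ω j 0 = 0
  nonneg : ∀ j x, 0 ≤ x → 0 ≤ ω j x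
  mono_index : ∀ j x, 0 ≤ x → ω j x ≤ ω (j + 1) x

/-- A parametric b-measure on `E` with respect to the family of moduli `ω`. -/
def IsParamBMeasure (ω : ℕ → ℝ → ℝ) (ν : E → Set ℝ → ℝ) : Prop :=
  (∀ y, IsBMeasure (ν y)) ∧
    ∀ j : ℕ, 1 ≤ j → ∃ m l : Measure ℝ, HasMBound ν j m ∧ HasLBound (ω j) ν j l

/-- A tagged partition of `[a,b]`. -/
structure TaggedPartition (a b : ℝ) where
  k : ℕ
  k_pos : 0 < k
  t : ℕ → ℝ
  tag : ℕ → ℝ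
  left : t 0 = a
  right : t k = b
  lt : ∀ i < k, t i < t (i + 1)
  tag_mem : ∀ i < k, tag i ∈ Set.Icc (t i) (t (i + 1))

/-- The mesh of the tagged partition is `< δ`. -/
def TaggedPartition.MeshLT {a b : ℝ} (P : TaggedPartition a b) (δ : ℝ) : Prop :=
  ∀ i < P.k, P.t (i + 1) - P.t i < δ

/-- The Riemann sum of the parametric b-measure `ν` along the curve `y` over the
tagged partition `P`. -/
def RiemannSum (ν : E → Set ℝ → ℝ) (y : ℝ → E) {a b : ℝ} (P : TaggedPartition a b) : ℝ :=
  ∑ i ∈ Finset.range P.k, ν (y (P.tag i)) (Set.Icc (P.t i) (P.t (i + 1)))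

/-- `L = ∫_a^b dν_{y(s)}` : `L` is the limit of the Riemann sums of `ν` along `y`
over tagged partitions of `[a,b]` as the mesh tends to `0`. -/
def IsCurveIntegral (ν : E → Set ℝ → ℝ) (y : ℝ → E) (a b : ℝ) (L : ℝ) : Prop :=
  ∀ ε > 0, ∃ δ > 0, ∀ P : TaggedPartition a b, P.MeshLT δ → |L - RiemannSum ν y P| < ε

/-- A suitable set of moduli of continuity `Θ = {θ_j^{[q₁,q₂]}}`. -/
structure IsSuitableModuli (Θ : ℕ → ℚ → ℚ → ℝ → ℝ) : Prop where
  continuousOn : ∀ (j : ℕ) (q₁ q₂ : ℚ), q₁ < q₂ → ContinuousOn (Θ j q₁ q₂) (Ici 0)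
  monotoneOn : ∀ (j : ℕ) (q₁ q₂ : ℚ), q₁ < q₂ → MonotoneOn (Θ j q₁ q₂) (Ici 0)
  map_zero : ∀ (j : ℕ) (q₁ q₂ : ℚ), q₁ < q₂ → Θ j q₁ q₂ 0 = 0
  nonneg : ∀ (j : ℕ) (q₁ q₂ : ℚ) (x : ℝ), q₁ < q₂ → 0 ≤ x → 0 ≤ Θ j q₁ q₂ x
  mono : ∀ (j₁ j₂ : ℕ) (q₁ q₂ p₁ p₂ : ℚ), j₁ ≤ j₂ → q₁ ≤ p₁ → p₁ < p₂ → p₂ ≤ q₂ →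
    ∀ x : ℝ, 0 ≤ x → Θ j₁ p₁ p₂ x ≤ Θ j₂ q₁ q₂ x

/-- The set `𝒦_j^I` of continuous functions `y : I → E`, `I = [q₁,q₂]`, bounded by `j`
and admitting `θ_j^I` as modulus of continuity. -/
def KSet (E : Type*) [NormedAddCommGroup E] (Θ : ℕ → ℚ → ℚ → ℝ → ℝ)
    (j : ℕ) (q₁ q₂ : ℚ) : Set (ℝ → E) :=
  {y | ContinuousOn y (Set.Icc (q₁ : ℝ) (q₂ : ℝ)) ∧
    (∀ t ∈ Set.Icc (q₁ : ℝ) (q₂ : ℝ), ‖y t‖ ≤ (j : ℝ)) ∧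
    ∀ t₁ ∈ Set.Icc (q₁ : ℝ) (q₂ : ℝ), ∀ t₂ ∈ Set.Icc (q₁ : ℝ) (q₂ : ℝ),
      ‖y t₁ - y t₂‖ ≤ Θ j q₁ q₂ |t₁ - t₂|}

/-- Convergence `ν_n → ν₀` in the topology `σ_Θ` : the integrals along curves of
`𝒦_j^I` converge uniformly, for every `j` and every compact interval `I` with
rational endpoints. -/
def SigmaThetaTendsto {E : Type*} [NormedAddCommGroup E] (Θ : ℕ → ℚ → ℚ → ℝ → ℝ)
    (ν : ℕ → E → Set ℝ → ℝ) (ν₀ : E → Set ℝ → ℝ) : Prop :=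
  ∀ (j : ℕ) (q₁ q₂ : ℚ), q₁ < q₂ → ∀ ε > 0, ∃ n₀ : ℕ, ∀ n ≥ n₀,
    ∀ y ∈ KSet E Θ j q₁ q₂, ∀ L L₀ : ℝ,
      IsCurveIntegral (ν n) y (q₁ : ℝ) (q₂ : ℝ) L →
      IsCurveIntegral ν₀ y (q₁ : ℝ) (q₂ : ℝ) L₀ → |L - L₀| < ε

/-- The time-translate `ν·t` of a parametric b-measure: `(ν·t)_y(A) = ν_y(A + t)`. -/
def BTranslate (ν : E → Set ℝ → ℝ) (t : ℝ) : E → Set ℝ → ℝ :=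
  fun y A => ν y ((fun s => s + t) '' A)

/-- The time-translate `m·t` of a Borel measure: `(m·t)(A) = m(A + t)`. -/
noncomputable def MTranslate (m : Measure ℝ) (t : ℝ) : Measure ℝ :=
  Measure.map (fun s => s - t) m

/-- An N-dimensional parametric b-measure on `E` with common m-bounds `m j` and
common Lipschitz l-bounds `l j`. -/
def IsNDimParamBMeasure {M : ℕ} (νbar : Fin M → E → Set ℝ → ℝ)
    (m l : ℕ → Measure ℝ) : Prop :=
  (∀ i y, IsBMeasure (νbar i y)) ∧
    ∀ j : ℕ, 1 ≤ j → GoodMeasure (m j) ∧ GoodMeasure (l j) ∧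
      (∀ i, ∀ y : E, ‖y‖ ≤ (j : ℝ) → TVLE (νbar i y) (m j)) ∧
      (∀ i, ∀ y₁ y₂ : E, ‖y₁‖ ≤ (j : ℝ) → ‖y₂‖ ≤ (j : ℝ) →
        DiffLE (νbar i y₁) (νbar i y₂) ‖y₁ - y₂‖ (l j))

/-- The oriented curve integral: `∫_b^a := -∫_a^b`. -/
def IsSignedCurveIntegral (ν : E → Set ℝ → ℝ) (y : ℝ → E) (a b : ℝ) (L : ℝ) : Prop :=
  (a ≤ b ∧ IsCurveIntegral ν y a b L) ∨ (b < a ∧ IsCurveIntegral ν y b a (-L))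

/-- `y` is a solution on `S` of the Cauchy problem `y' = ν̄_y`, `y(t₀) = y₀`, for the
N-dimensional parametric b-measure `ν̄`: componentwise,
`y_i(t) = y_{0,i} + ∫_{t₀}^t dν^i_{y(s)}`. -/
def IsSolutionOn {M : ℕ} (νbar : Fin M → EuclideanSpace ℝ (Fin M) → Set ℝ → ℝ)
    (t₀ : ℝ) (y₀ : EuclideanSpace ℝ (Fin M)) (S : Set ℝ)
    (y : ℝ → EuclideanSpace ℝ (Fin M)) : Prop :=
  t₀ ∈ S ∧ y t₀ = y₀ ∧ ContinuousOn y S ∧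
    ∀ t ∈ S, ∀ i : Fin M, IsSignedCurveIntegral (νbar i) y t₀ t (y t i - y₀ i)

/-- `y` is the maximal (noncontinuable) solution, defined on the open interval `S`:
every solution on an interval containing `t₀` is a restriction of `y`. -/
def IsMaximalSolution {M : ℕ} (νbar : Fin M → EuclideanSpace ℝ (Fin M) → Set ℝ → ℝ)
    (t₀ : ℝ) (y₀ : EuclideanSpace ℝ (Fin M)) (S : Set ℝ)
    (y : ℝ → EuclideanSpace ℝ (Fin M)) : Prop :=
  IsSolutionOn νbar t₀ y₀ S y ∧ IsOpen S ∧ S.OrdConnected ∧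
    ∀ S' : Set ℝ, S'.OrdConnected → ∀ z, IsSolutionOn νbar t₀ y₀ S' z →
      S' ⊆ S ∧ Set.EqOn z y S'



open scoped ENNReal NNReal

/-- Total bound from setwise bound. -/
lemma aux_partition (σ : Set ℝ → ℝ) (c : ℝ) (l : Measure ℝ) (hl : IsLocallyFiniteMeasure l)
    (h : ∀ B, Bornology.IsBounded B → MeasurableSet B → |σ B| ≤ c * (l B).toReal)
    (A : Set ℝ) (hA : Bornology.IsBounded A) (n : ℕ) (P : Fin n → Set ℝ)
    (hP : IsBorelPartition A P) : ∑ i, |σ (P i)| ≤ c * (l A).toReal := by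
  obtain ⟨hm, hd, hU⟩ := hP
  have hsub : ∀ i, P i ⊆ A := fun i => hU ▸ subset_iUnion P i
  have hfin : ∀ i, l (P i) ≠ ∞ := fun i => ((hA.subset (hsub i)).measure_lt_top).ne
  have h1 : (l A).toReal = ∑ i, (l (P i)).toReal := by
    rw [← hU, measure_iUnion hd hm, tsum_fintype, ENNReal.toReal_sum (fun i _ => hfin i)]
  rw [h1, Finset.mul_sum]
  exact Finset.sum_le_sum fun i _ => h _ (hA.subset (hsub i)) (hm i)

/-- Stieltjes comparison. -/
lemma aux_stieltjes_le (f g : StieltjesFunction ℝ)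
    (h : ∀ a b, a ≤ b → f b - f a ≤ g b - g a) : f.measure ≤ g.measure := by
  let d : StieltjesFunction ℝ :=
    { toFun := fun t => g t - f t
      mono' := fun a b hab => by have := h a b hab; simp only; linarith
      right_continuous' := fun x => (g.right_continuous x).sub (f.right_continuous x) }
  have : g = f + d := by
    ext x
    change g x = f x + (g x - f x)
    ring
  rw [this, StieltjesFunction.measure_add]
  exact Measure.le_add_right le_rfl

/-- continuous Stieltjes function -/
def aux_st (f : ℝ → ℝ) (hm : Monotone f) (hc : Continuous f) : StieltjesFunction ℝ where
  toFun := f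
  mono' := hm
  right_continuous' := fun _ => hc.continuousWithinAt

lemma aux_st_singleton (f : ℝ → ℝ) (hm : Monotone f) (hc : Continuous f) (t : ℝ) :
    (aux_st f hm hc).measure {t} = 0 := by
  rw [StieltjesFunction.measure_singleton]
  have : Function.leftLim f t = f t := hc.continuousAt.continuousWithinAt.leftLim_eq
  change ENNReal.ofReal (f t - Function.leftLim f t) = 0
  rw [this]; simp

lemma aux_countable (m : Measure ℝ) (h : ∀ t, m {t} = 0) (D : Set ℝ) (hD : D.Countable) :
    m D = 0 := by
  have : NullSingletonClass m := ⟨h⟩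
  exact hD.measure_zero m

/-- The signed set function built from two Stieltjes measures. -/
noncomputable def aux_sig (p q : StieltjesFunction ℝ) (A : Set ℝ) : ℝ :=
  (p.measure A).toReal - (q.measure A).toReal

lemma aux_hasSum (m : Measure ℝ) [IsLocallyFiniteMeasure m] (A : ℕ → Set ℝ)
    (hm : ∀ n, MeasurableSet (A n)) (hd : Pairwise (Function.onFun Disjoint A))
    (hb : Bornology.IsBounded (⋃ n, A n)) :
    HasSum (fun n => (m (A n)).toReal) (m (⋃ n, A n)).toReal := by
  have hfin := hb.measure_lt_top (μ := m)
  rw [measure_iUnion hd hm] at hfin ⊢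
  have h := ENNReal.hasSum_toReal hfin.ne
  rwa [← ENNReal.tsum_toReal_eq fun n => ENNReal.ne_top_of_tsum_ne_top hfin.ne n] at h

lemma aux_sig_bmeasure (p q : StieltjesFunction ℝ) (hp : ∀ t, p.measure {t} = 0)
    (hq : ∀ t, q.measure {t} = 0) : IsBMeasure (aux_sig p q) where
  empty := by simp [aux_sig]
  countably_additive := fun A hm _ hd hb =>
    (aux_hasSum p.measure A hm hd hb).sub (aux_hasSum q.measure A hm hd hb)
  singleton := fun t => by simp only [aux_sig, hp, hq]; simp

lemma aux_sig_Icc (p q : StieltjesFunction ℝ) (hp : ∀ t, p.measure {t} = 0)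
    (hq : ∀ t, q.measure {t} = 0) (a b : ℝ) (hab : a ≤ b) :
    aux_sig p q (Icc a b) = (p b - p a) - (q b - q a) := by
  have : NullSingletonClass p.measure := ⟨hp⟩
  have : NullSingletonClass q.measure := ⟨hq⟩
  rw [aux_sig, measure_congr (Ioc_ae_eq_Icc (μ := p.measure)).symm,
    measure_congr (Ioc_ae_eq_Icc (μ := q.measure)).symm, StieltjesFunction.measure_Ioc,
    StieltjesFunction.measure_Ioc,
    ENNReal.toReal_ofReal (sub_nonneg.2 (p.mono hab)),
    ENNReal.toReal_ofReal (sub_nonneg.2 (q.mono hab))]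

lemma aux_sig_diff_countable (p q : StieltjesFunction ℝ) (hp : ∀ t, p.measure {t} = 0)
    (hq : ∀ t, q.measure {t} = 0) (A D : Set ℝ) (hD : D.Countable) :
    aux_sig p q (A \ D) = aux_sig p q A := by
  rw [aux_sig, aux_sig, measure_sdiff_null (aux_countable _ hp D hD),
    measure_sdiff_null (aux_countable _ hq D hD)]

lemma aux_toReal_le (p q r : StieltjesFunction ℝ) (A : Set ℝ) (hA : Bornology.IsBounded A)
    (h : ∀ a b, a ≤ b → p b - p a ≤ (q b - q a) + (r b - r a)) :
    (p.measure A).toReal ≤ (q.measure A).toReal + (r.measure A).toReal := by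
  have h1 : p.measure ≤ (q + r).measure := aux_stieltjes_le _ _ fun a b hab => by
    simp only [StieltjesFunction.add_apply]; linarith [h a b hab]
  rw [← ENNReal.toReal_add hA.measure_lt_top.ne hA.measure_lt_top.ne]
  refine ENNReal.toReal_mono (ENNReal.add_ne_top.2 ⟨hA.measure_lt_top.ne, hA.measure_lt_top.ne⟩) ?_
  have := h1 A
  rwa [StieltjesFunction.measure_add] at this

lemma aux_add_toReal (q r : StieltjesFunction ℝ) (A : Set ℝ) (hA : Bornology.IsBounded A) :
    ((q + r).measure A).toReal = (q.measure A).toReal + (r.measure A).toReal := by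
  rw [StieltjesFunction.measure_add, Measure.add_apply,
    ENNReal.toReal_add hA.measure_lt_top.ne hA.measure_lt_top.ne]

lemma aux_smul_apply (c : ℝ≥0) (H : StieltjesFunction ℝ) (t : ℝ) : (c • H) t = c * H t := rfl

lemma aux_sig_diff_le (p q p' q' H : StieltjesFunction ℝ) (c : ℝ) (hc : 0 ≤ c)
    (h : ∀ a b, a ≤ b → |((p b - q b) - (p a - q a)) - ((p' b - q' b) - (p' a - q' a))|
      ≤ c * (H b - H a)) (A : Set ℝ) (hA : Bornology.IsBounded A) :
    |aux_sig p q A - aux_sig p' q' A| ≤ c * (H.measure A).toReal := by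
  lift c to ℝ≥0 using hc
  have h3 : ((c • H).measure A).toReal = c * (H.measure A).toReal := by
    rw [StieltjesFunction.measure_smul]
    simp [ENNReal.toReal_mul]
  have h1 := aux_toReal_le (p + q') (p' + q) (c • H) A hA (fun a b hab => by
    have := (abs_le.1 (h a b hab)).2
    simp only [StieltjesFunction.add_apply, aux_smul_apply]; linarith)
  have h2 := aux_toReal_le (p' + q) (p + q') (c • H) A hA (fun a b hab => by
    have := (abs_le.1 (h a b hab)).1
    simp only [StieltjesFunction.add_apply, aux_smul_apply]; linarith)
  rw [aux_add_toReal _ _ _ hA, aux_add_toReal _ _ _ hA, h3] at h1 h2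
  rw [abs_le]; simp only [aux_sig]
  constructor <;> linarith

lemma aux_sig_zero (A : Set ℝ) : aux_sig 0 0 A = 0 := by simp [aux_sig]

/-- distribution function -/
noncomputable def aux_dist (l : Set ℝ → ℝ) (t : ℝ) : ℝ :=
  if 0 ≤ t then l (Ioc 0 t) else - l (Ioc t 0)

lemma aux_dist_sub (l : Set ℝ → ℝ)
    (h : ∀ a b c, a ≤ b → b ≤ c → l (Ioc a c) = l (Ioc a b) + l (Ioc b c)) (s t : ℝ)
    (hst : s ≤ t) : aux_dist l t - aux_dist l s = l (Ioc s t) := by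
  unfold aux_dist
  split_ifs with h1 h2 h2
  · linarith [h 0 s t h2 hst]
  · linarith [h s 0 t (by linarith) h1]
  · linarith
  · linarith [h s t 0 hst (by linarith)]

lemma aux_dist_zero (l : Set ℝ → ℝ) (h : l ∅ = 0) : aux_dist l 0 = 0 := by
  simp [aux_dist, h]

lemma aux_bm_add (μ : Set ℝ → ℝ) (hμ : IsBMeasure μ) (A B : Set ℝ) (hA : MeasurableSet A)
    (hB : MeasurableSet B) (bA : Bornology.IsBounded A) (bB : Bornology.IsBounded B)
    (hd : Disjoint A B) : μ (A ∪ B) = μ A + μ B := by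
  let S : ℕ → Set ℝ := fun n => if n = 0 then A else if n = 1 then B else ∅
  have hU : (⋃ n, S n) = A ∪ B := by
    ext x
    simp only [mem_iUnion, mem_union, S]
    constructor
    · rintro ⟨n, hn⟩
      split_ifs at hn <;> simp_all
    · rintro (h | h)
      · exact ⟨0, by simpa using h⟩
      · exact ⟨1, by simpa using h⟩
  have hs := hμ.countably_additive S (fun n => by dsimp only [S]; split_ifs <;> simp [*])
    (fun n => by dsimp only [S]; split_ifs <;> simp [*])
    (fun i j hij => by
      simp only [Function.onFun, S]
      split_ifs <;> simp_all [hd.symm])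
    (by rw [hU]; exact bA.union bB)
  rw [hU] at hs
  have h2 : HasSum (fun n => μ (S n)) (∑ n ∈ Finset.range 2, μ (S n)) := by
    apply hasSum_sum_of_ne_finset_zero
    intro n hn
    have : 2 ≤ n := not_lt.1 fun h => hn (Finset.mem_range.2 h)
    have e : S n = ∅ := by simp only [S]; rw [if_neg (by omega), if_neg (by omega)]
    rw [e, hμ.empty]
  rw [hs.unique h2]
  simp [Finset.sum_range_succ, S]

lemma aux_bm_Ioc (μ : Set ℝ → ℝ) (hμ : IsBMeasure μ) (a b c : ℝ) (hab : a ≤ b) (hbc : b ≤ c) :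
    μ (Ioc a c) = μ (Ioc a b) + μ (Ioc b c) := by
  rw [← Ioc_union_Ioc_eq_Ioc hab hbc]
  exact aux_bm_add μ hμ _ _ measurableSet_Ioc measurableSet_Ioc (Metric.isBounded_Ioc _ _)
    (Metric.isBounded_Ioc _ _) (Ioc_disjoint_Ioc_of_le le_rfl)

lemma aux_bm_Icc (μ : Set ℝ → ℝ) (hμ : IsBMeasure μ) (a b : ℝ) (hab : a ≤ b) :
    μ (Icc a b) = μ (Ioc a b) := by
  rw [← Icc_union_Ioc_eq_Icc le_rfl hab, Icc_self]
  rw [aux_bm_add μ hμ _ _ (measurableSet_singleton a) measurableSet_Ioc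
    Bornology.isBounded_singleton (Metric.isBounded_Ioc _ _) (by simp), hμ.singleton, zero_add]

lemma aux_m_Ioc (m : Measure ℝ) (hm : IsLocallyFiniteMeasure m) (a b c : ℝ) (hab : a ≤ b)
    (hbc : b ≤ c) : m.real (Ioc a c) = m.real (Ioc a b) + m.real (Ioc b c) := by
  rw [← Ioc_union_Ioc_eq_Ioc hab hbc]
  exact measureReal_union (Ioc_disjoint_Ioc_of_le le_rfl) measurableSet_Ioc
    (Metric.isBounded_Ioc _ _).measure_lt_top.ne (Metric.isBounded_Ioc _ _).measure_lt_top.ne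

lemma aux_single_partition (A : Set ℝ) (hA : MeasurableSet A) :
    IsBorelPartition A (fun _ : Fin 1 => A) :=
  ⟨fun _ => hA, fun i j hij => (hij (Subsingleton.elim i j)).elim, iUnion_const A⟩

lemma aux_tv (μ : Set ℝ → ℝ) (m : Measure ℝ) (h : TVLE μ m) (a b : ℝ) :
    |μ (Ioc a b)| ≤ m.real (Ioc a b) := by
  have := h _ (Metric.isBounded_Ioc a b) measurableSet_Ioc 1 _
    (aux_single_partition (Ioc a b) measurableSet_Ioc)
  simpa [Measure.real] using this

lemma aux_df (μ₁ μ₂ : Set ℝ → ℝ) (c : ℝ) (m : Measure ℝ) (h : DiffLE μ₁ μ₂ c m) (a b : ℝ) :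
    |μ₁ (Ioc a b) - μ₂ (Ioc a b)| ≤ c * m.real (Ioc a b) := by
  have := h _ (Metric.isBounded_Ioc a b) measurableSet_Ioc 1 _
    (aux_single_partition (Ioc a b) measurableSet_Ioc)
  simpa [Measure.real] using this

/-- Local boundedness from short-interval boundedness. -/
lemma aux_bound (L : ℕ → ℝ → ℝ) (δ C : ℝ) (hδ : 0 < δ)
    (h0 : ∀ n, L n 0 = 0)
    (h : ∀ n s t, s ≤ t → t - s ≤ δ → L n t - L n s ≤ C)
    (hmono : ∀ n, Monotone (L n)) (t : ℝ) :
    ∃ K, 0 ≤ K ∧ ∀ n, |L n t| ≤ K := by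
  have key : ∀ N : ℕ, ∀ n s t, s ≤ t → t - s ≤ N * δ → L n t - L n s ≤ N * C := by
    intro N
    induction N with
    | zero =>
      intro n s t hst h1
      have : s = t := by simp at h1; linarith
      simp [this]
    | succ N ih =>
      intro n s t hst h1
      push_cast at h1 ⊢
      have hC : 0 ≤ C := by simpa using h n 0 0 le_rfl (by simpa using hδ.le)
      by_cases h2 : t - s ≤ N * δ
      · linarith [ih n s t hst h2]
      · push Not at h2
        have hN : (0:ℝ) ≤ N * δ := by positivity
        have h3 := ih n s (s + N * δ) (by linarith) (by linarith)
        have h4 := h n (s + N * δ) t (by linarith) (by linarith)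
        linarith
  obtain ⟨N, hN⟩ := exists_nat_gt (|t| / δ)
  have hN' : |t| ≤ N * δ := by
    rw [div_lt_iff₀ hδ] at hN; exact hN.le
  have hC : 0 ≤ C := by simpa using h 0 0 0 le_rfl (by simpa using hδ.le)
  refine ⟨N * C, by positivity, fun n => ?_⟩
  rcases le_total 0 t with ht | ht
  · have h1 := key N n 0 t ht (by rw [abs_of_nonneg ht] at hN'; linarith)
    have h2 := hmono n ht
    rw [h0] at h1 h2
    rw [abs_of_nonneg h2]; linarith
  · have h1 := key N n t 0 ht (by rw [abs_of_nonpos ht] at hN'; linarith)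
    have h2 := hmono n ht
    rw [h0] at h1 h2
    rw [abs_of_nonpos h2]; linarith

/-- Limits along the hyperfilter. -/
lemma aux_ultra (u : ℕ → ℝ) (K : ℝ) (h : ∀ n, |u n| ≤ K) :
    ∃ L, Tendsto u (hyperfilter ℕ : Filter ℕ) (𝓝 L) := by
  have hc : IsCompact (Icc (-K) K) := isCompact_Icc
  obtain ⟨L, -, hL⟩ := hc.ultrafilter_le_nhds ((hyperfilter ℕ).map u) (by
    rw [le_principal_iff, Ultrafilter.mem_coe, Ultrafilter.mem_map]
    exact Filter.univ_mem' fun n => abs_le.1 (h n))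
  exact ⟨L, hL⟩

/-- Diagonal extraction. -/
lemma aux_diag {ι : Type*} [Countable ι] (u : ι → ℕ → ℝ) (K : ι → ℝ)
    (h : ∀ i n, |u i n| ≤ K i) :
    ∃ φ : ℕ → ℕ, StrictMono φ ∧ ∀ i, ∃ L, Tendsto (fun k => u i (φ k)) atTop (𝓝 L) := by
  have hc : IsCompact (Set.univ.pi fun i => Icc (-K i) (K i)) :=
    isCompact_univ_pi fun i => isCompact_Icc
  obtain ⟨a, -, φ, hφ, ha⟩ := hc.tendsto_subseq (x := fun n i => u i n)
    (fun n i _ => abs_le.1 (h i n))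
  exact ⟨φ, hφ, fun i => ⟨a i, (tendsto_pi_nhds.1 ha) i⟩⟩

lemma aux_approx (u : ℕ → ℝ)
    (h : ∀ ε > 0, ∃ v : ℕ → ℝ, (∃ L, Tendsto v atTop (𝓝 L)) ∧ ∀ n, |u n - v n| ≤ ε) :
    ∃ L, Tendsto u atTop (𝓝 L) := by
  apply cauchySeq_tendsto_of_complete
  rw [Metric.cauchySeq_iff']
  intro ε hε
  obtain ⟨v, ⟨L, hL⟩, hv⟩ := h (ε / 4) (by positivity)
  obtain ⟨n₀, h0⟩ := (Metric.cauchySeq_iff'.1 hL.cauchySeq) (ε / 4) (by positivity)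
  refine ⟨n₀, fun n hn => ?_⟩
  have h1 := h0 n hn
  rw [Real.dist_eq] at h1 ⊢
  have h2 := hv n
  have h3 := hv n₀
  rw [abs_lt] at *
  rw [abs_le] at *
  constructor <;> linarith

/-- The abstract compactness theorem for distribution functions. -/
lemma aux_abstract {E : Type*} [NormedAddCommGroup E] [TopologicalSpace.SeparableSpace E]
    (ω : ℕ → ℝ → ℝ) (hω : IsModulusFamily ω)
    (F : ℕ → E → ℝ → ℝ) (M L : ℕ → ℕ → ℝ → ℝ)
    (F0 : ∀ n y, F n y 0 = 0) (M0 : ∀ n j, M n j 0 = 0) (L0 : ∀ n j, L n j 0 = 0)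
    (f1 : ∀ n (j : ℕ), 1 ≤ j → ∀ y : E, ‖y‖ ≤ (j : ℕ) → ∀ s t, s ≤ t →
      |F n y t - F n y s| ≤ M n j t - M n j s)
    (f2 : ∀ n (j : ℕ), 1 ≤ j → ∀ y₁ y₂ : E, ‖y₁‖ ≤ (j : ℕ) → ‖y₂‖ ≤ (j : ℕ) → ∀ s t, s ≤ t →
      |(F n y₁ t - F n y₁ s) - (F n y₂ t - F n y₂ s)| ≤ ω j ‖y₁ - y₂‖ * (L n j t - L n j s))
    (Mm : ∀ n (j : ℕ), 1 ≤ j → Monotone (M n j)) (Lm : ∀ n j, 1 ≤ j → Monotone (L n j))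
    (f4 : ∀ j : ℕ, 1 ≤ j → ∀ ε > (0 : ℝ), ∃ δ > (0 : ℝ), ∀ n s t, s ≤ t → t - s < δ →
      M n j t - M n j s ≤ ε)
    (f5 : ∀ j : ℕ, 1 ≤ j → ∃ c, ∀ n s t, s ≤ t → t - s ≤ 1 → L n j t - L n j s ≤ c) :
    ∃ φ : ℕ → ℕ, StrictMono φ ∧ ∃ f : E → ℝ → ℝ,
      (∀ y t, Tendsto (fun k => F (φ k) y t) atTop (𝓝 (f y t))) ∧
      ∀ j : ℕ, 1 ≤ j → ∃ G H : ℝ → ℝ, Monotone G ∧ Continuous G ∧ Monotone H ∧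
        (∀ y : E, ‖y‖ ≤ (j : ℕ) → ∀ s t, s ≤ t → |f y t - f y s| ≤ G t - G s) ∧
        (∀ y₁ y₂ : E, ‖y₁‖ ≤ (j : ℕ) → ‖y₂‖ ≤ (j : ℕ) → ∀ s t, s ≤ t →
          |(f y₁ t - f y₁ s) - (f y₂ t - f y₂ s)| ≤ ω j ‖y₁ - y₂‖ * (H t - H s)) := by
  have Mb : ∀ j : ℕ, 1 ≤ j → ∀ t, ∃ K, 0 ≤ K ∧ ∀ n, |M n j t| ≤ K := by
    intro j hj t
    obtain ⟨δ, hδ, h⟩ := f4 j hj 1 one_pos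
    exact aux_bound (fun n => M n j) (δ / 2) 1 (by positivity) (fun n => M0 n j)
      (fun n s t hst h1 => h n s t hst (by linarith)) (fun n => Mm n j hj) t
  have Lb : ∀ j : ℕ, 1 ≤ j → ∀ t, ∃ K, 0 ≤ K ∧ ∀ n, |L n j t| ≤ K := by
    intro j hj t
    obtain ⟨c, h⟩ := f5 j hj
    exact aux_bound (fun n => L n j) 1 c one_pos (fun n => L0 n j) h (fun n => Lm n j hj) t
  -- bound of F
  have f1' : ∀ n (j : ℕ), 1 ≤ j → ∀ y : E, ‖y‖ ≤ (j : ℕ) → ∀ s t,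
      |F n y t - F n y s| ≤ |M n j t - M n j s| := by
    intro n j hj y hy s t
    rcases le_total s t with h | h
    · exact (f1 n j hj y hy s t h).trans (le_abs_self _)
    · rw [abs_sub_comm, abs_sub_comm (M n j t)]
      exact (f1 n j hj y hy t s h).trans (le_abs_self _)
  have hjy : ∀ y : E, ∃ j : ℕ, 1 ≤ j ∧ ‖y‖ + 1 ≤ j := by
    intro y
    obtain ⟨j, hj⟩ := exists_nat_ge (‖y‖ + 1)
    refine ⟨j, ?_, hj⟩
    have : (1:ℝ) ≤ j := by linarith [norm_nonneg y]
    exact_mod_cast this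
  have Fb : ∀ y t, ∃ K, ∀ n, |F n y t| ≤ K := by
    intro y t
    obtain ⟨j, hj, hy⟩ := hjy y
    obtain ⟨K, -, hK⟩ := Mb j hj t
    refine ⟨K, fun n => ?_⟩
    have := f1' n j hj y (by linarith) 0 t
    rw [F0, M0, sub_zero, sub_zero] at this
    exact this.trans (hK n)
  choose KF hKF using Fb
  have : Nonempty E := ⟨0⟩
  obtain ⟨φ, hφ, hconv⟩ := aux_diag (ι := ℕ × ℚ)
    (fun i n => F n (TopologicalSpace.denseSeq E i.1) (i.2 : ℝ))
    (fun i => KF (TopologicalSpace.denseSeq E i.1) (i.2 : ℝ)) (fun i n => hKF _ _ n)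
  have hall : ∀ y t, ∃ l, Tendsto (fun k => F (φ k) y t) atTop (𝓝 l) := by
    intro y t
    obtain ⟨j, hj, hy⟩ := hjy y
    obtain ⟨K, hK0, hK⟩ := Lb j hj t
    apply aux_approx
    intro ε hε
    obtain ⟨δ, hδ, hM⟩ := f4 j hj (ε / 2) (by positivity)
    -- choose the modulus
    have hω0 : ∃ η > 0, ∀ x, 0 ≤ x → x < η → ω j x * K ≤ ε / 2 := by
      have hc := (hω.continuousOn j) 0 (by simp)
      rw [Metric.continuousWithinAt_iff] at hc
      obtain ⟨η, hη, h⟩ := hc (ε / 2 / (K + 1)) (by positivity)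
      refine ⟨η, hη, fun x hx hxη => ?_⟩
      have h1 := h (show x ∈ Ici (0:ℝ) from hx) (by rw [Real.dist_eq, sub_zero, abs_of_nonneg hx]; exact hxη)
      rw [hω.map_zero, Real.dist_eq, sub_zero, abs_of_nonneg (hω.nonneg j x hx)] at h1
      calc ω j x * K ≤ (ε / 2 / (K + 1)) * (K + 1) :=
            mul_le_mul h1.le (by linarith) hK0 (by positivity)
        _ = ε / 2 := by field_simp
    obtain ⟨η, hη, hηω⟩ := hω0
    obtain ⟨i, hi⟩ := (TopologicalSpace.denseRange_denseSeq E).exists_dist_lt y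
      (lt_min hη one_pos)
    set y' := TopologicalSpace.denseSeq E i with hy'
    obtain ⟨q, hq1, hq2⟩ := exists_rat_btwn (show t < t + δ by linarith)
    refine ⟨fun k => F (φ k) y' q, hconv (i, q), fun k => ?_⟩
    rw [dist_eq_norm] at hi
    have hyy : ‖y'‖ ≤ j := by
      have h1 : ‖y'‖ ≤ ‖y‖ + ‖y - y'‖ := by
        rw [norm_sub_rev]; exact norm_le_norm_add_norm_sub' y' y
      have := hi.trans_le (min_le_right _ _)
      linarith
    have h1 : |F (φ k) y' t - F (φ k) y' q| ≤ ε / 2 := by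
      rw [abs_sub_comm]
      exact (f1 _ j hj y' hyy t q hq1.le).trans (hM _ _ _ hq1.le (by linarith))
    have h2 : |F (φ k) y t - F (φ k) y' t| ≤ ε / 2 := by
      have hη' := hηω ‖y - y'‖ (norm_nonneg _) (hi.trans_le (min_le_left _ _))
      have hLK := abs_le.1 (hK (φ k))
      have hwn := hω.nonneg j ‖y - y'‖ (norm_nonneg _)
      rcases le_total 0 t with ht | ht
      · have := f2 (φ k) j hj y y' (by linarith) hyy 0 t ht
        simp only [F0, L0, sub_zero] at this
        exact this.trans ((mul_le_mul_of_nonneg_left hLK.2 hwn).trans hη')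
      · have := f2 (φ k) j hj y y' (by linarith) hyy t 0 ht
        simp only [F0, L0, zero_sub] at this
        rw [← abs_neg] at this
        rw [show F (φ k) y t - F (φ k) y' t = -(-F (φ k) y t - -F (φ k) y' t) by ring]
        exact this.trans ((mul_le_mul_of_nonneg_left (by linarith [hLK.1]) hwn).trans hη')
    calc |F (φ k) y t - F (φ k) y' q|
        ≤ |F (φ k) y t - F (φ k) y' t| + |F (φ k) y' t - F (φ k) y' q| := abs_sub_le _ _ _
      _ ≤ ε := by linarith
  choose f hf using hall
  refine ⟨φ, hφ, f, hf, fun j hj => ?_⟩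
  have hU : (hyperfilter ℕ : Filter ℕ) ≤ atTop := Nat.hyperfilter_le_atTop
  have hfU : ∀ y t, Tendsto (fun k => F (φ k) y t) (hyperfilter ℕ : Filter ℕ) (𝓝 (f y t)) :=
    fun y t => (hf y t).mono_left hU
  have hG : ∀ t, ∃ g, Tendsto (fun k => M (φ k) j t) (hyperfilter ℕ : Filter ℕ) (𝓝 g) := by
    intro t
    obtain ⟨K, -, hK⟩ := Mb j hj t
    exact aux_ultra _ K fun k => hK (φ k)
  have hH : ∀ t, ∃ g, Tendsto (fun k => L (φ k) j t) (hyperfilter ℕ : Filter ℕ) (𝓝 g) := by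
    intro t
    obtain ⟨K, -, hK⟩ := Lb j hj t
    exact aux_ultra _ K fun k => hK (φ k)
  choose G hG using hG
  choose H hH using hH
  have Gm : Monotone G := fun s t hst =>
    le_of_tendsto_of_tendsto' (hG s) (hG t) fun k => Mm (φ k) j hj hst
  have Hm : Monotone H := fun s t hst =>
    le_of_tendsto_of_tendsto' (hH s) (hH t) fun k => Lm (φ k) j hj hst
  refine ⟨G, H, Gm, ?_, Hm, ?_, ?_⟩
  · rw [Metric.continuous_iff]
    intro t ε hε
    obtain ⟨δ, hδ, h⟩ := f4 j hj (ε / 2) (by positivity)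
    have key : ∀ s t, s ≤ t → t - s < δ → G t - G s ≤ ε / 2 := fun s t hst hd =>
      le_of_tendsto' ((hG t).sub (hG s)) fun k => h (φ k) s t hst hd
    refine ⟨δ, hδ, fun s hs => ?_⟩
    rw [Real.dist_eq] at hs ⊢
    rcases le_total s t with hst | hst
    · rw [abs_sub_comm, abs_of_nonneg (sub_nonneg.2 hst)] at hs
      rw [abs_sub_comm, abs_of_nonneg (sub_nonneg.2 (Gm hst))]
      linarith [key s t hst hs]
    · rw [abs_of_nonneg (sub_nonneg.2 hst)] at hs
      rw [abs_of_nonneg (sub_nonneg.2 (Gm hst))]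
      linarith [key t s hst hs]
  · intro y hy s t hst
    exact le_of_tendsto_of_tendsto' ((hfU y t).sub (hfU y s)).abs ((hG t).sub (hG s))
      fun k => f1 (φ k) j hj y hy s t hst
  · intro y₁ y₂ h₁ h₂ s t hst
    exact le_of_tendsto_of_tendsto'
      (((hfU y₁ t).sub (hfU y₁ s)).sub ((hfU y₂ t).sub (hfU y₂ s))).abs
      (((hH t).sub (hH s)).const_mul _)
      fun k => f2 (φ k) j hj y₁ y₂ h₁ h₂ s t hst

lemma aux_cont (f G : ℝ → ℝ) (hG : Continuous G)
    (h : ∀ s t, s ≤ t → |f t - f s| ≤ G t - G s) : Continuous f := by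
  have h' : ∀ s t, dist (f s) (f t) ≤ dist (G s) (G t) := by
    intro s t
    rw [Real.dist_eq, Real.dist_eq]
    rcases le_total s t with hst | hst
    · rw [abs_sub_comm, abs_sub_comm (G s)]
      exact (h s t hst).trans (le_abs_self _)
    · exact (h t s hst).trans (le_abs_self _)
  rw [Metric.continuous_iff] at hG ⊢
  intro t ε hε
  obtain ⟨δ, hδ, hd⟩ := hG t ε hε
  exact ⟨δ, hδ, fun s hs => (h' s t).trans_lt (hd s hs)⟩

lemma aux_rightLim (g H : ℝ → ℝ) (c : ℝ) (hg : Continuous g) (hH : Monotone H)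
    (h : ∀ s t, s ≤ t → |g t - g s| ≤ c * (H t - H s)) (s t : ℝ) (hst : s ≤ t) :
    |g t - g s| ≤ c * (hH.stieltjesFunction t - hH.stieltjesFunction s) := by
  have sh : ∀ x : ℝ, Tendsto (fun e : ℝ => x + e) (𝓝[>] 0) (𝓝[>] x) := by
    intro x
    refine tendsto_nhdsWithin_iff.2 ⟨?_, ?_⟩
    · have : Tendsto (fun e : ℝ => x + e) (𝓝 0) (𝓝 (x + 0)) :=
        (continuous_const.add continuous_id).tendsto 0
      rw [add_zero] at this
      exact this.mono_left nhdsWithin_le_nhds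
    · filter_upwards [self_mem_nhdsWithin] with e he
      have : (0:ℝ) < e := he
      simpa using this
  have hgx : ∀ x, Tendsto (fun e : ℝ => g (x + e)) (𝓝[>] 0) (𝓝 (g x)) := fun x =>
    (hg.tendsto x).comp ((sh x).mono_right nhdsWithin_le_nhds)
  have hHx : ∀ x, Tendsto (fun e : ℝ => H (x + e)) (𝓝[>] 0) (𝓝 (hH.stieltjesFunction x)) :=
    fun x => (hH.tendsto_rightLim x).comp (sh x)
  exact le_of_tendsto_of_tendsto' ((hgx t).sub (hgx s)).abs (((hHx t).sub (hHx s)).const_mul c)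
    fun e => h _ _ (by linarith)

theorem stmt11 {N : ℕ} (ω : ℕ → ℝ → ℝ) (hω : IsModulusFamily ω)
    (ν : ℕ → EuclideanSpace ℝ (Fin N) → Set ℝ → ℝ)
    (hν : ∀ n, IsParamBMeasure ω (ν n))
    (mB lB : ℕ → ℕ → Measure ℝ)
    (hmB : ∀ n j, 1 ≤ j → HasMBound (ν n) j (mB n j))
    (hlB : ∀ n j, 1 ≤ j → HasLBound (ω j) (ν n) j (lB n j))
    (hmeq : ∀ j, 1 ≤ j → ∀ ε > (0 : ℝ), ∃ δ > (0 : ℝ), ∀ n, ∀ s t : ℝ,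
      0 ≤ t - s → t - s < δ → mB n j (Set.Icc s t) < ENNReal.ofReal ε)
    (hlbd : ∀ j, 1 ≤ j → ∃ c > (0 : ℝ), ∀ n, ∀ t : ℝ,
      lB n j (Set.Icc t (t + 1)) ≤ ENNReal.ofReal c) :
    ∃ φ : ℕ → ℕ, StrictMono φ ∧
      ∃ μ : EuclideanSpace ℝ (Fin N) → Set ℝ → ℝ, IsParamBMeasure ω μ ∧
        ∀ y : EuclideanSpace ℝ (Fin N), ∀ a b : ℝ, a ≤ b →
          Tendsto (fun k => ν (φ k) y (Set.Icc a b)) atTop (𝓝 (μ y (Set.Icc a b))) := by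
  obtain ⟨φ, hφ, f, hf, hGH⟩ := aux_abstract ω hω (fun n y => aux_dist (ν n y))
    (fun n j => aux_dist (mB n j).real) (fun n j => aux_dist (lB n j).real)
    (fun n y => aux_dist_zero _ ((hν n).1 y).empty)
    (fun n j => aux_dist_zero _ (by simp)) (fun n j => aux_dist_zero _ (by simp))
    (fun n j hj y hy s t hst => by
      rw [aux_dist_sub _ (aux_bm_Ioc _ ((hν n).1 y)) s t hst,
        aux_dist_sub _ (aux_m_Ioc _ (hmB n j hj).1.1) s t hst]
      exact aux_tv _ _ ((hmB n j hj).2 y hy) s t)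
    (fun n j hj y₁ y₂ h₁ h₂ s t hst => by
      rw [aux_dist_sub _ (aux_bm_Ioc _ ((hν n).1 y₁)) s t hst,
        aux_dist_sub _ (aux_bm_Ioc _ ((hν n).1 y₂)) s t hst,
        aux_dist_sub _ (aux_m_Ioc _ (hlB n j hj).1.1) s t hst]
      exact aux_df _ _ _ _ ((hlB n j hj).2 y₁ y₂ h₁ h₂) s t)
    (fun n j hj s t hst => by
      have := aux_dist_sub _ (aux_m_Ioc _ (hmB n j hj).1.1) s t hst
      have h0 := measureReal_nonneg (μ := mB n j) (s := Ioc s t)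
      linarith)
    (fun n j hj s t hst => by
      have := aux_dist_sub _ (aux_m_Ioc _ (hlB n j hj).1.1) s t hst
      have h0 := measureReal_nonneg (μ := lB n j) (s := Ioc s t)
      linarith)
    (fun j hj ε hε => by
      obtain ⟨δ, hδ, h⟩ := hmeq j hj ε hε
      refine ⟨δ, hδ, fun n s t hst hd => ?_⟩
      rw [aux_dist_sub _ (aux_m_Ioc _ (hmB n j hj).1.1) s t hst]
      exact ENNReal.toReal_le_of_le_ofReal hε.le
        ((measure_mono Ioc_subset_Icc_self).trans (h n s t (by linarith) hd).le))
    (fun j hj => by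
      obtain ⟨c, hc, h⟩ := hlbd j hj
      refine ⟨c, fun n s t hst hd => ?_⟩
      rw [aux_dist_sub _ (aux_m_Ioc _ (hlB n j hj).1.1) s t hst]
      exact ENNReal.toReal_le_of_le_ofReal hc.le
        ((measure_mono (Ioc_subset_Icc_self.trans
          (Icc_subset_Icc_right (by linarith)))).trans (h n s)))
  choose G H hGm hGc hHm hG hH using hGH
  have hJ : ∀ y : EuclideanSpace ℝ (Fin N), 1 ≤ ⌈‖y‖⌉₊ + 1 := fun y => by omega
  have hyJ : ∀ y : EuclideanSpace ℝ (Fin N), ‖y‖ ≤ ((⌈‖y‖⌉₊ + 1 : ℕ) : ℝ) := fun y => by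
    push_cast
    linarith [Nat.le_ceil ‖y‖]
  have fc : ∀ y, Continuous (f y) := fun y =>
    aux_cont _ _ (hGc _ (hJ y)) (hG _ (hJ y) y (hyJ y))
  have pm : ∀ y, Monotone (fun t => f y t + G _ (hJ y) t) := fun y s t hst => by
    have := (abs_le.1 (hG _ (hJ y) y (hyJ y) s t hst)).1
    simp only
    linarith
  let p : EuclideanSpace ℝ (Fin N) → StieltjesFunction ℝ := fun y =>
    aux_st (fun t => f y t + G _ (hJ y) t) (pm y) ((fc y).add (hGc _ (hJ y)))
  let q : EuclideanSpace ℝ (Fin N) → StieltjesFunction ℝ := fun y =>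
    aux_st (G _ (hJ y)) (hGm _ (hJ y)) (hGc _ (hJ y))
  have hp : ∀ y t, (p y).measure {t} = 0 := fun y t => aux_st_singleton _ _ _ t
  have hq : ∀ y t, (q y).measure {t} = 0 := fun y t => aux_st_singleton _ _ _ t
  have hpq : ∀ y t, p y t - q y t = f y t := fun y t => by
    change (f y t + G _ (hJ y) t) - G _ (hJ y) t = f y t
    ring
  refine ⟨φ, hφ, fun y => aux_sig (p y) (q y), ⟨fun y => aux_sig_bmeasure _ _ (hp y) (hq y), ?_⟩, ?_⟩
  · intro j hj
    let g := aux_st (G j hj) (hGm j hj) (hGc j hj)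
    let S := (hHm j hj).stieltjesFunction
    let D : Set ℝ := {x | Function.leftLim S x ≠ S x}
    have hD : D.Countable := S.countable_leftLim_ne
    refine ⟨g.measure, S.measure.restrict Dᶜ, ⟨⟨inferInstance, fun t => aux_st_singleton _ _ _ t⟩, ?_⟩,
      ⟨⟨inferInstance, ?_⟩, ?_⟩⟩
    · intro y hy A hA _ n P hP
      have := aux_partition (aux_sig (p y) (q y)) 1 g.measure inferInstance (fun B hB _ => by
        have h1 := aux_sig_diff_le (p y) (q y) 0 0 g 1 zero_le_one (fun a b hab => by
          simp only [hpq, StieltjesFunction.zero_apply, sub_zero, one_mul]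
          exact hG j hj y hy a b hab) B hB
        rwa [aux_sig_zero, sub_zero] at h1) A hA n P hP
      rwa [one_mul] at this
    · intro t
      rw [Measure.restrict_apply (measurableSet_singleton t)]
      by_cases ht : t ∈ D
      · have : ({t} ∩ Dᶜ : Set ℝ) = ∅ := by
          ext x; simp only [mem_inter_iff, mem_singleton_iff, mem_compl_iff]
          constructor
          · rintro ⟨rfl, h⟩; exact (h ht).elim
          · intro h; exact h.elim
        rw [this, measure_empty]
      · refine measure_mono_null inter_subset_left ?_
        rw [StieltjesFunction.measure_singleton]
        have : Function.leftLim S t = S t := by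
          by_contra h; exact ht h
        rw [this]; simp
    · intro y₁ y₂ h₁ h₂ A hA _ n P hP
      refine aux_partition (fun B => aux_sig (p y₁) (q y₁) B - aux_sig (p y₂) (q y₂) B)
        (ω j ‖y₁ - y₂‖) (S.measure.restrict Dᶜ) inferInstance (fun B hB hBm => ?_) A hA n P hP
      rw [Measure.restrict_apply hBm, ← diff_eq,
        ← aux_sig_diff_countable (p y₁) (q y₁) (hp y₁) (hq y₁) B D hD,
        ← aux_sig_diff_countable (p y₂) (q y₂) (hp y₂) (hq y₂) B D hD]
      refine aux_sig_diff_le (p y₁) (q y₁) (p y₂) (q y₂) S _ (hω.nonneg j _ (norm_nonneg _))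
        (fun a b hab => ?_) _ (hB.subset diff_subset)
      simp only [hpq]
      have := aux_rightLim (fun t => f y₁ t - f y₂ t) (H j hj) (ω j ‖y₁ - y₂‖)
        ((fc y₁).sub (fc y₂)) (hHm j hj) (fun s t hst => by
          have := hH j hj y₁ y₂ h₁ h₂ s t hst
          rwa [show (f y₁ t - f y₂ t) - (f y₁ s - f y₂ s)
            = (f y₁ t - f y₁ s) - (f y₂ t - f y₂ s) by ring]) a b hab
      rwa [show (f y₁ b - f y₁ a) - (f y₂ b - f y₂ a)
            = (f y₁ b - f y₂ b) - (f y₁ a - f y₂ a) by ring]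
  · intro y a b hab
    have h1 : aux_sig (p y) (q y) (Icc a b) = f y b - f y a := by
      rw [aux_sig_Icc _ _ (hp y) (hq y) a b hab, ← hpq, ← hpq]
      ring
    simp only [h1]
    refine ((hf y b).sub (hf y a)).congr fun k => ?_
    rw [aux_dist_sub _ (aux_bm_Ioc _ ((hν (φ k)).1 y)) a b hab,
      aux_bm_Icc _ ((hν (φ k)).1 y) a b hab]
end

section
/- Let ν̄ = (ν¹,…,ν^N) be an N-dimensional parametric b-measure on ℝ^N with common m-bounds {m_j}_{j≥1} and common Lipschitz l-bounds {l_j}_{j≥1}, and let (t₀, y₀) ∈ ℝ × ℝ^N. Then there exists δ > 0 such that there is a unique continuous function y : [t₀−δ, t₀+δ] → ℝ^N satisfying, for each t ∈ [t₀−δ, t₀+δ] and each component i = 1,…,N, y_i(t) = y_{0,i} + ∫_{t₀}^t dν^i_{y(s)}. -/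
open MeasureTheory Set Filter Topology

variable {E : Type*} [NormedAddCommGroup E]

lemma bm_union {μ : Set ℝ → ℝ} (h : IsBMeasure μ) {A B : Set ℝ} (hA : MeasurableSet A)
    (hB : MeasurableSet B) (bA : Bornology.IsBounded A) (bB : Bornology.IsBounded B)
    (hd : Disjoint A B) : μ (A ∪ B) = μ A + μ B := by
  have key := h.countably_additive (fun n => if n = 0 then A else if n = 1 then B else ∅)
    (by intro n; split_ifs <;> simp [hA, hB])
    (by intro n; split_ifs <;> simp [bA, bB])
    (by
      intro i k hik
      simp only [Function.onFun]
      split_ifs <;> first | omega | exact hd | exact hd.symm | simp)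
  have hU : (⋃ n : ℕ, (if n = 0 then A else if n = 1 then B else ∅)) = A ∪ B := by
    ext x
    simp only [mem_iUnion, mem_union]
    constructor
    · rintro ⟨n, hn⟩
      split_ifs at hn
      · exact Or.inl hn
      · exact Or.inr hn
      · exact absurd hn (by simp)
    · rintro (hx | hx)
      · exact ⟨0, by simpa using hx⟩
      · exact ⟨1, by simpa using hx⟩
  rw [hU] at key
  have k1 := key (bA.union bB)
  have k2 : HasSum (fun n : ℕ => μ (if n = 0 then A else if n = 1 then B else ∅))
      (∑ n ∈ Finset.range 2, μ (if n = 0 then A else if n = 1 then B else ∅)) := by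
    apply hasSum_sum_of_ne_finset_zero
    intro n hn
    have : 2 ≤ n := by simpa [Nat.succ_le_iff] using hn
    rw [if_neg (by omega), if_neg (by omega), h.empty]
  have := k1.unique k2
  rw [this]
  simp [Finset.sum_range_succ]

lemma bm_add {μ : Set ℝ → ℝ} (h : IsBMeasure μ) {a b c : ℝ} (hab : a ≤ b) (hbc : b ≤ c) :
    μ (Icc a c) = μ (Icc a b) + μ (Icc b c) := by
  have e1 : Icc a c = Icc a b ∪ Ioc b c := (Icc_union_Ioc_eq_Icc hab hbc).symm
  have e2 : Icc b c = {b} ∪ Ioc b c := by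
    rw [← Icc_self, Icc_union_Ioc_eq_Icc le_rfl hbc]
  have d1 : Disjoint (Icc a b) (Ioc b c) := by
    rw [Set.disjoint_left]; rintro x ⟨_, h1⟩ ⟨h2, _⟩; linarith
  have d2 : Disjoint ({b} : Set ℝ) (Ioc b c) := by simp
  rw [e1, e2, bm_union h measurableSet_Icc measurableSet_Ioc (Metric.isBounded_Icc _ _)
    (Metric.isBounded_Ioc _ _) d1, bm_union h (measurableSet_singleton b) measurableSet_Ioc
    Bornology.isBounded_singleton (Metric.isBounded_Ioc _ _) d2, h.singleton, zero_add]

lemma gm_fin {m : Measure ℝ} (h : GoodMeasure m) (a b : ℝ) : m (Icc a b) ≠ ⊤ := by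
  have := h.1
  exact isCompact_Icc.measure_lt_top.ne

lemma gm_add {m : Measure ℝ} (h : GoodMeasure m) {a b c : ℝ} (hab : a ≤ b) (hbc : b ≤ c) :
    (m (Icc a c)).toReal = (m (Icc a b)).toReal + (m (Icc b c)).toReal := by
  have : NullSingletonClass m := ⟨h.2⟩
  rw [← ENNReal.toReal_add (gm_fin h _ _) (gm_fin h _ _), ← Icc_union_Ioc_eq_Icc hab hbc,
    measure_union (by rw [Set.disjoint_left]; rintro x ⟨_, h1⟩ ⟨h2, _⟩; linarith)
    measurableSet_Ioc, measure_congr (Ioc_ae_eq_Icc (μ := m) (a := b) (b := c))]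

lemma gm_mono {m : Measure ℝ} (h : GoodMeasure m) {a b c d : ℝ} (hac : c ≤ a) (hbd : b ≤ d) :
    (m (Icc a b)).toReal ≤ (m (Icc c d)).toReal :=
  ENNReal.toReal_mono (gm_fin h _ _) (measure_mono (Icc_subset_Icc hac hbd))

lemma gm_small {m : Measure ℝ} (h : GoodMeasure m) (t : ℝ) {ε : ℝ} (hε : 0 < ε) :
    ∃ δ > 0, (m (Icc (t - δ) (t + δ))).toReal < ε := by
  have key : Tendsto (fun n : ℕ => m (Icc (t - 1 / ((n : ℝ) + 1)) (t + 1 / ((n : ℝ) + 1)))) atTop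
      (𝓝 (m (⋂ n : ℕ, Icc (t - 1 / ((n : ℝ) + 1)) (t + 1 / ((n : ℝ) + 1))))) := by
    apply tendsto_measure_iInter_atTop
    · intro n; exact measurableSet_Icc.nullMeasurableSet
    · intro a b hab
      have := Nat.one_div_le_one_div (α := ℝ) hab
      exact Icc_subset_Icc (by linarith) (by linarith)
    · exact ⟨0, gm_fin h _ _⟩
  have hI : (⋂ n : ℕ, Icc (t - 1 / ((n : ℝ) + 1)) (t + 1 / ((n : ℝ) + 1))) = {t} := by
    ext x
    simp only [mem_iInter, mem_singleton_iff]
    constructor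
    · intro hx
      by_contra hne
      obtain ⟨n, hn⟩ := exists_nat_one_div_lt (abs_pos.mpr (sub_ne_zero.mpr hne))
      have := hx n
      have h2 : |x - t| ≤ 1 / ((n : ℝ) + 1) := abs_le.mpr ⟨by linarith [this.1], by linarith [this.2]⟩
      linarith
    · rintro rfl n
      have : (0 : ℝ) < 1 / ((n : ℝ) + 1) := Nat.one_div_pos_of_nat
      exact ⟨by linarith, by linarith⟩
  rw [hI, h.2 t] at key
  have k2 := (ENNReal.tendsto_toReal (by simp : (0 : ENNReal) ≠ ⊤)).comp key
  simp only [ENNReal.toReal_zero] at k2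
  obtain ⟨n, hn⟩ := (k2.eventually (gt_mem_nhds hε)).exists
  exact ⟨1 / ((n : ℝ) + 1), Nat.one_div_pos_of_nat, hn⟩

lemma tp_mono {a b : ℝ} (P : TaggedPartition a b) : ∀ j, j ≤ P.k → ∀ i, i ≤ j → P.t i ≤ P.t j := by
  intro j
  induction j with
  | zero => intro _ i hi; rw [Nat.le_zero.mp hi]
  | succ n ih =>
    intro hn i hi
    rcases Nat.lt_or_ge i (n + 1) with h | h
    · exact (ih (by omega) i (by omega)).trans (P.lt n (by omega)).le
    · rw [show i = n + 1 by omega]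

lemma tp_ge {a b : ℝ} (P : TaggedPartition a b) {i : ℕ} (hi : i ≤ P.k) : a ≤ P.t i := by
  have := tp_mono P i hi 0 (by omega); rwa [P.left] at this

lemma tp_le {a b : ℝ} (P : TaggedPartition a b) {i : ℕ} (hi : i ≤ P.k) : P.t i ≤ b := by
  have := tp_mono P P.k le_rfl i hi; rwa [P.right] at this

lemma tp_tag {a b : ℝ} (P : TaggedPartition a b) {i : ℕ} (hi : i < P.k) : P.tag i ∈ Icc a b :=
  ⟨(tp_ge P hi.le).trans (P.tag_mem i hi).1, (P.tag_mem i hi).2.trans (tp_le P (by omega))⟩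

lemma tp_sum {a b : ℝ} (P : TaggedPartition a b) {m : Measure ℝ} (h : GoodMeasure m) :
    ∑ i ∈ Finset.range P.k, (m (Icc (P.t i) (P.t (i + 1)))).toReal = (m (Icc a b)).toReal := by
  have h2 : ∀ n, n ≤ P.k → ∑ i ∈ Finset.range n, (m (Icc (P.t i) (P.t (i + 1)))).toReal
      = (m (Icc a (P.t n))).toReal := by
    intro n
    induction n with
    | zero => intro _; simp [P.left, h.2]
    | succ n ih =>
      intro hn
      rw [Finset.sum_range_succ, ih (by omega),
        gm_add h (tp_ge P (i := n) (by omega)) (P.lt n (by omega)).le]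
  rw [h2 P.k le_rfl, P.right]

lemma tp_exists {a b δ : ℝ} (hab : a < b) (hδ : 0 < δ) :
    ∃ P : TaggedPartition a b, P.MeshLT δ := by
  obtain ⟨n, hn⟩ := exists_nat_gt ((b - a) / δ)
  have hn0 : (0 : ℝ) < n := lt_trans (div_pos (by linarith) hδ) hn
  have hstep : 0 < (b - a) / n := div_pos (by linarith) hn0
  have hlt : (b - a) / n < δ := by
    rw [div_lt_iff₀ hδ] at hn
    rw [div_lt_iff₀ hn0]; linarith
  refine ⟨⟨n, by exact_mod_cast hn0, fun i => a + i * ((b - a) / n), fun i => a + i * ((b - a) / n),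
    by simp, ?_, ?_, ?_⟩, ?_⟩
  · field_simp; ring
  · intro i _; push_cast; nlinarith
  · intro i _; refine ⟨le_rfl, ?_⟩; push_cast; nlinarith
  · intro i _; simp only; push_cast; linarith

lemma ci_bound {ν : E → Set ℝ → ℝ} {m : Measure ℝ} (h : GoodMeasure m) {R : ℝ}
    (hm : ∀ y, ‖y‖ ≤ R → ∀ s t, s ≤ t → |ν y (Icc s t)| ≤ (m (Icc s t)).toReal)
    {y : ℝ → E} {a b L : ℝ} (hab : a < b) (hy : ∀ t ∈ Icc a b, ‖y t‖ ≤ R)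
    (hL : IsCurveIntegral ν y a b L) : |L| ≤ (m (Icc a b)).toReal := by
  apply le_of_forall_pos_le_add
  intro ε hε
  obtain ⟨δ, hδ, H⟩ := hL ε hε
  obtain ⟨P, hP⟩ := tp_exists hab hδ
  have h1 := H P hP
  have h2 : |RiemannSum ν y P| ≤ (m (Icc a b)).toReal := by
    rw [← tp_sum P h]
    refine (Finset.abs_sum_le_sum_abs _ _).trans (Finset.sum_le_sum ?_)
    intro i hi
    rw [Finset.mem_range] at hi
    exact hm _ (hy _ (tp_tag P hi)) _ _ (P.lt i hi).le
  have := abs_sub_abs_le_abs_sub L (RiemannSum ν y P)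
  linarith

lemma ci_diff {ν : E → Set ℝ → ℝ} {l : Measure ℝ} (h : GoodMeasure l) {R : ℝ}
    (hl : ∀ y z, ‖y‖ ≤ R → ‖z‖ ≤ R → ∀ s t, s ≤ t →
      |ν y (Icc s t) - ν z (Icc s t)| ≤ ‖y - z‖ * (l (Icc s t)).toReal)
    {y z : ℝ → E} {a b L L' D : ℝ} (hab : a < b) (hy : ∀ t ∈ Icc a b, ‖y t‖ ≤ R)
    (hz : ∀ t ∈ Icc a b, ‖z t‖ ≤ R) (hD : ∀ t ∈ Icc a b, ‖y t - z t‖ ≤ D)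
    (hL : IsCurveIntegral ν y a b L) (hL' : IsCurveIntegral ν z a b L') :
    |L - L'| ≤ D * (l (Icc a b)).toReal := by
  apply le_of_forall_pos_le_add
  intro ε hε
  obtain ⟨δ, hδ, H⟩ := hL (ε / 2) (by linarith)
  obtain ⟨δ', hδ', H'⟩ := hL' (ε / 2) (by linarith)
  obtain ⟨P, hP⟩ := tp_exists hab (lt_min hδ hδ')
  have h1 := H P (fun i hi => (hP i hi).trans_le (min_le_left _ _))
  have h1' := H' P (fun i hi => (hP i hi).trans_le (min_le_right _ _))
  have h2 : |RiemannSum ν y P - RiemannSum ν z P| ≤ D * (l (Icc a b)).toReal := by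
    rw [← tp_sum P h, Finset.mul_sum]
    unfold RiemannSum
    rw [← Finset.sum_sub_distrib]
    refine (Finset.abs_sum_le_sum_abs _ _).trans (Finset.sum_le_sum ?_)
    intro i hi
    rw [Finset.mem_range] at hi
    have ht := tp_tag P hi
    exact (hl _ _ (hy _ ht) (hz _ ht) _ _ (P.lt i hi).le).trans
      (mul_le_mul_of_nonneg_right (hD _ ht) ENNReal.toReal_nonneg)
  rw [abs_lt] at h1 h1'
  rw [abs_le] at h2 ⊢
  constructor <;> linarith [h1.1, h1.2, h1'.1, h1'.2, h2.1, h2.2]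

lemma ci_of_primitive {ν : E → Set ℝ → ℝ} {l : Measure ℝ} (h : GoodMeasure l)
    {y : ℝ → E} {c d : ℝ} (hy : ContinuousOn y (Icc c d)) {Φ : ℝ → ℝ}
    (hΦ : ∀ s t τ ω, c ≤ s → s ≤ t → t ≤ d → τ ∈ Icc s t →
      (∀ u ∈ Icc s t, ‖y u - y τ‖ ≤ ω) →
      |Φ t - Φ s - ν (y τ) (Icc s t)| ≤ ω * (l (Icc s t)).toReal)
    {a b : ℝ} (hca : c ≤ a) (hbd : b ≤ d) : IsCurveIntegral ν y a b (Φ b - Φ a) := by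
  intro ε hε
  set K := (l (Icc a b)).toReal with hK
  have hK0 : 0 ≤ K := ENNReal.toReal_nonneg
  have huc := isCompact_Icc.uniformContinuousOn_of_continuous hy
  rw [Metric.uniformContinuousOn_iff] at huc
  have hη : 0 < ε / (K + 1) := by positivity
  obtain ⟨δ, hδ, H⟩ := huc (ε / (K + 1)) hη
  refine ⟨δ, hδ, fun P hP => ?_⟩
  have e1 : Φ b - Φ a = ∑ i ∈ Finset.range P.k, (Φ (P.t (i + 1)) - Φ (P.t i)) := by
    rw [Finset.sum_range_sub (fun i => Φ (P.t i)), P.left, P.right]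
  have e2 : |Φ b - Φ a - RiemannSum ν y P| ≤ ε / (K + 1) * K := by
    generalize ε / (K + 1) = η at H
    rw [hK, ← tp_sum P h, Finset.mul_sum, e1]
    unfold RiemannSum
    rw [← Finset.sum_sub_distrib]
    refine (Finset.abs_sum_le_sum_abs _ _).trans (Finset.sum_le_sum ?_)
    intro i hi
    rw [Finset.mem_range] at hi
    have ha := tp_ge P (i := i) (by omega)
    have hb := tp_le P (i := i + 1) (by omega)
    have ht := P.tag_mem i hi
    apply hΦ _ _ _ _ (by linarith) (P.lt i hi).le (by linarith) ht
    intro u hu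
    rw [← dist_eq_norm]
    apply (H u ⟨by linarith [hu.1], by linarith [hu.2]⟩ (P.tag i)
      ⟨by linarith [ht.1], by linarith [ht.2]⟩ _).le
    have := hP i hi
    rw [Real.dist_eq, abs_lt]
    constructor <;> linarith [hu.1, hu.2, ht.1, ht.2]
  refine e2.trans_lt ?_
  rw [div_mul_eq_mul_div, div_lt_iff₀ (by positivity)]
  nlinarith

lemma box_ineq {H Λ : ℝ → ℝ} {κ c d s t p q : ℝ} (hcs : c ≤ s) (hst : s ≤ t)
    (hcp : c ≤ p) (hpq : p ≤ q) (hqd : q ≤ d)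
    (hH : p < t → s < q → ∀ u v, c ≤ u → u ≤ v → v ≤ d → |H v - H u| ≤ κ * (Λ v - Λ u)) :
    |(H (min t q) - H (min t p)) - (H (min s q) - H (min s p))|
      ≤ κ * ((Λ (min t q) - Λ (min t p)) - (Λ (min s q) - Λ (min s p))) := by
  rcases le_or_gt t p with h1 | h1
  · rw [min_eq_left h1, min_eq_left (h1.trans hpq), min_eq_left (hst.trans h1),
      min_eq_left (hst.trans (h1.trans hpq))]
    simp
  rcases le_or_gt q s with h2 | h2
  · rw [min_eq_right h2, min_eq_right (h2.trans hst), min_eq_right (hpq.trans h2),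
      min_eq_right (hpq.trans (h2.trans hst))]
    simp
  have hH := hH h1 h2
  rw [min_eq_right h1.le, min_eq_left h2.le]
  have hmd : min t q ≤ d := (min_le_right _ _).trans hqd
  rcases le_total s p with h3 | h3
  · rw [min_eq_left h3]
    have := hH p (min t q) hcp (le_min h1.le hpq) hmd
    simpa using this
  · rw [min_eq_right h3]
    have := hH s (min t q) hcs (le_min hst h2.le) hmd
    rw [show H (min t q) - H p - (H s - H p) = H (min t q) - H s by ring,
      show Λ (min t q) - Λ p - (Λ s - Λ p) = Λ (min t q) - Λ s by ring]
    exact this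

lemma exists_primitive {ν : E → Set ℝ → ℝ} (hb : ∀ y, IsBMeasure (ν y)) {m l : Measure ℝ}
    (gm : GoodMeasure m) (gl : GoodMeasure l) {R : ℝ}
    (hm : ∀ y, ‖y‖ ≤ R → ∀ s t, s ≤ t → |ν y (Icc s t)| ≤ (m (Icc s t)).toReal)
    (hl : ∀ y z, ‖y‖ ≤ R → ‖z‖ ≤ R → ∀ s t, s ≤ t →
      |ν y (Icc s t) - ν z (Icc s t)| ≤ ‖y - z‖ * (l (Icc s t)).toReal)
    {c d : ℝ} (hcd : c < d) {y : ℝ → E} (hy : ContinuousOn y (Icc c d))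
    (hyR : ∀ t ∈ Icc c d, ‖y t‖ ≤ R) :
    ∃ Φ : ℝ → ℝ, ∀ s t τ ω, c ≤ s → s ≤ t → t ≤ d → τ ∈ Icc s t →
      (∀ u ∈ Icc s t, ‖y u - y τ‖ ≤ ω) →
      |Φ t - Φ s - ν (y τ) (Icc s t)| ≤ ω * (l (Icc s t)).toReal := by
  let p : ℕ → ℕ → ℝ := fun n i => c + i * ((d - c) / ((n : ℝ) + 1))
  have hstep : ∀ n : ℕ, 0 < (d - c) / ((n : ℝ) + 1) := fun n => div_pos (by linarith) (by positivity)
  have hp0 : ∀ n, p n 0 = c := fun n => by simp [p]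
  have hpn : ∀ n, p n (n + 1) = d := fun n => by simp only [p]; push_cast; field_simp; ring
  have hps : ∀ n i, p n (i + 1) = p n i + (d - c) / ((n : ℝ) + 1) := fun n i => by
    simp only [p]; push_cast; ring
  have hpc : ∀ n i, c ≤ p n i := fun n i => by
    have := (hstep n).le; simp only [p]; nlinarith [mul_nonneg (Nat.cast_nonneg (α := ℝ) i) this]
  have hpd : ∀ n i, i ≤ n + 1 → p n i ≤ d := fun n i hi => by
    rw [← hpn n]; simp only [p]
    have : (i : ℝ) ≤ ((n + 1 : ℕ) : ℝ) := by exact_mod_cast hi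
    nlinarith [mul_le_mul_of_nonneg_right this (hstep n).le]
  let Λ : ℝ → ℝ := fun t => (l (Icc c t)).toReal
  let M : ℝ → ℝ := fun t => (m (Icc c t)).toReal
  let G : E → ℝ → ℝ := fun x t => ν x (Icc c t)
  have hΛ : ∀ s t, c ≤ s → s ≤ t → Λ t - Λ s = (l (Icc s t)).toReal := fun s t h1 h2 => by
    simp only [Λ]; rw [gm_add gl h1 h2]; ring
  have hM : ∀ s t, c ≤ s → s ≤ t → M t - M s = (m (Icc s t)).toReal := fun s t h1 h2 => by
    simp only [M]; rw [gm_add gm h1 h2]; ring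
  have hG : ∀ x s t, c ≤ s → s ≤ t → G x t - G x s = ν x (Icc s t) := fun x s t h1 h2 => by
    simp only [G]; rw [bm_add (hb x) h1 h2]; ring
  have tele : ∀ (f : ℝ → ℝ) n t, c ≤ t → t ≤ d →
      ∑ i ∈ Finset.range (n + 1), (f (min t (p n (i + 1))) - f (min t (p n i))) = f t - f c := by
    intro f n t h1 h2
    rw [Finset.sum_range_sub (fun i => f (min t (p n i))), hp0, hpn, min_eq_left h2,
      min_eq_right h1]
  let Φn : ℕ → ℝ → ℝ := fun n t => ∑ i ∈ Finset.range (n + 1),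
    (G (y (p n i)) (min t (p n (i + 1))) - G (y (p n i)) (min t (p n i)))
  have hyp : ∀ n i, i ∈ Finset.range (n + 1) → ‖y (p n i)‖ ≤ R := fun n i hi =>
    hyR _ ⟨hpc n i, hpd n i (by rw [Finset.mem_range] at hi; omega)⟩
  have hbd : ∀ n t, c ≤ t → t ≤ d → Φn n t ∈ Icc (-(M d - M c)) (M d - M c) := by
    intro n t h1 h2
    rw [mem_Icc, ← abs_le]
    have h3 : |Φn n t| ≤ M t - M c := by
      rw [← tele M n t h1 h2]
      refine (Finset.abs_sum_le_sum_abs _ _).trans (Finset.sum_le_sum fun i hi => ?_)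
      have k1 : c ≤ min t (p n i) := le_min h1 (hpc n i)
      have k2 : min t (p n i) ≤ min t (p n (i + 1)) :=
        min_le_min_left _ (by linarith [hps n i, hstep n])
      rw [hG _ _ _ k1 k2, hM _ _ k1 k2]
      exact hm _ (hyp n i hi) _ _ k2
    have h4 : M t ≤ M d := gm_mono gm le_rfl h2
    linarith
  have hest : ∀ ε > 0, ∀ᶠ n in atTop, ∀ s t τ ω, c ≤ s → s ≤ t → t ≤ d → τ ∈ Icc s t →
      (∀ u ∈ Icc s t, ‖y u - y τ‖ ≤ ω) →
      |Φn n t - Φn n s - ν (y τ) (Icc s t)| ≤ (ω + ε) * (l (Icc s t)).toReal := by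
    intro ε hε
    have huc := isCompact_Icc.uniformContinuousOn_of_continuous hy
    rw [Metric.uniformContinuousOn_iff] at huc
    obtain ⟨δ, hδ, H⟩ := huc ε hε
    obtain ⟨n₀, hn₀⟩ := exists_nat_gt ((d - c) / δ)
    filter_upwards [eventually_ge_atTop n₀] with n hn s t τ ω hs hst ht hτ hω
    have hmesh : (d - c) / ((n : ℝ) + 1) < δ := by
      have : (n₀ : ℝ) ≤ n := by exact_mod_cast hn
      rw [div_lt_iff₀ hδ] at hn₀
      rw [div_lt_iff₀ (by positivity)]
      nlinarith
    have e1 : Φn n t - Φn n s - ν (y τ) (Icc s t) = ∑ i ∈ Finset.range (n + 1),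
        (((G (y (p n i)) (min t (p n (i + 1))) - G (y τ) (min t (p n (i + 1))))
          - (G (y (p n i)) (min t (p n i)) - G (y τ) (min t (p n i))))
        - ((G (y (p n i)) (min s (p n (i + 1))) - G (y τ) (min s (p n (i + 1))))
          - (G (y (p n i)) (min s (p n i)) - G (y τ) (min s (p n i))))) := by
      have t1 := tele (G (y τ)) n t (hs.trans hst) ht
      have t2 := tele (G (y τ)) n s hs (hst.trans ht)
      have : ν (y τ) (Icc s t) = (G (y τ) t - G (y τ) c) - (G (y τ) s - G (y τ) c) := by
        rw [← hG _ s t hs hst]; ring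
      rw [this, ← t1, ← t2]
      simp only [Φn]
      rw [← Finset.sum_sub_distrib, ← Finset.sum_sub_distrib, ← Finset.sum_sub_distrib]
      exact Finset.sum_congr rfl fun i _ => by ring
    have e2 : (ω + ε) * (l (Icc s t)).toReal = ∑ i ∈ Finset.range (n + 1), (ω + ε) *
        ((Λ (min t (p n (i + 1))) - Λ (min t (p n i)))
          - (Λ (min s (p n (i + 1))) - Λ (min s (p n i)))) := by
      rw [← Finset.mul_sum, Finset.sum_sub_distrib, tele Λ n t (hs.trans hst) ht,
        tele Λ n s hs (hst.trans ht), ← hΛ s t hs hst]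
      ring
    rw [e1, e2]
    refine (Finset.abs_sum_le_sum_abs _ _).trans (Finset.sum_le_sum ?_)
    intro i hi
    have hi' : i < n + 1 := by simpa using hi
    have hstp := hstep n
    have hpsi := hps n i
    refine box_ineq (H := fun u => G (y (p n i)) u - G (y τ) u) (d := d) hs hst (hpc n i)
      (by linarith) (hpd n (i + 1) (by omega)) ?_
    intro h1 h2 u v hu huv _
    have hdist : ‖y (p n i) - y τ‖ ≤ ω + ε := by
      have hω0 : 0 ≤ ω := (norm_nonneg _).trans (hω τ hτ)
      rcases le_or_gt s (p n i) with h3 | h3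
      · linarith [hω _ ⟨h3, h1.le⟩]
      · have k1 := H (p n i) ⟨hpc n i, by linarith⟩ s ⟨hs, by linarith⟩
          (by rw [Real.dist_eq, abs_lt]; constructor <;> linarith)
        rw [dist_eq_norm] at k1
        have k2 := hω s ⟨le_rfl, hst⟩
        have k3 := norm_sub_le_norm_sub_add_norm_sub (y (p n i)) (y s) (y τ)
        linarith
    have hτR := hyR τ ⟨hs.trans hτ.1, hτ.2.trans ht⟩
    have k := hl _ _ (hyp n i hi) hτR u v huv
    rw [← hG _ u v hu huv, ← hG _ u v hu huv, ← hΛ u v hu huv] at k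
    have hnn : 0 ≤ Λ v - Λ u := by rw [hΛ u v hu huv]; exact ENNReal.toReal_nonneg
    rw [show G (y (p n i)) v - G (y τ) v - (G (y (p n i)) u - G (y τ) u) =
      G (y (p n i)) v - G (y (p n i)) u - (G (y τ) v - G (y τ) u) by ring]
    exact k.trans (mul_le_mul_of_nonneg_right hdist hnn)
  let U : Ultrafilter ℕ := Filter.hyperfilter ℕ
  have hU : (U : Filter ℕ) ≤ atTop := by
    rw [← Nat.cofinite_eq_atTop]; exact Filter.hyperfilter_le_cofinite
  have hlim : ∀ t, ∃ x, c ≤ t → t ≤ d → Tendsto (fun n => Φn n t) U (𝓝 x) := by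
    intro t
    by_cases h1 : c ≤ t ∧ t ≤ d
    · have hc : IsCompact (Icc (-(M d - M c)) (M d - M c)) := isCompact_Icc
      obtain ⟨x, -, hx⟩ := hc.ultrafilter_le_nhds (U.map (fun n => Φn n t)) (by
        rw [le_principal_iff]
        exact Filter.Eventually.of_forall (f := (U : Filter ℕ)) (fun n => hbd n t h1.1 h1.2))
      exact ⟨x, fun _ _ => hx⟩
    · exact ⟨0, fun h2 h3 => absurd ⟨h2, h3⟩ h1⟩
  choose Φ hΦ using hlim
  refine ⟨Φ, fun s t τ ω hs hst ht hτ hω => ?_⟩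
  have key : ∀ ε > 0, |Φ t - Φ s - ν (y τ) (Icc s t)| ≤ (ω + ε) * (l (Icc s t)).toReal := by
    intro ε hε
    have lim : Tendsto (fun n => |Φn n t - Φn n s - ν (y τ) (Icc s t)|) U
        (𝓝 |Φ t - Φ s - ν (y τ) (Icc s t)|) :=
      (((hΦ t (hs.trans hst) ht).sub (hΦ s hs (hst.trans ht))).sub_const _).abs
    refine le_of_tendsto lim ?_
    exact ((hest ε hε).filter_mono hU).mono fun n hn => hn s t τ ω hs hst ht hτ hω
  have lim2 : Tendsto (fun ε : ℝ => (ω + ε) * (l (Icc s t)).toReal) (𝓝[>] 0)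
      (𝓝 ((ω + 0) * (l (Icc s t)).toReal)) :=
    ((continuous_const.add continuous_id).mul continuous_const).tendsto 0 |>.mono_left
      nhdsWithin_le_nhds
  rw [add_zero] at lim2
  exact ge_of_tendsto lim2 (eventually_mem_nhdsWithin.mono fun ε hε => key ε hε)

lemma norm_le_coord {N : ℕ} (v : EuclideanSpace ℝ (Fin N)) {B : ℝ} (h : ∀ i, |v i| ≤ B) :
    ‖v‖ ≤ N * B := by
  have h1 : ‖v‖ ≤ ∑ i, |v i| := by
    rw [EuclideanSpace.norm_eq]
    apply Real.sqrt_le_iff.mpr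
    refine ⟨Finset.sum_nonneg fun i _ => abs_nonneg _, ?_⟩
    have := Finset.sum_sq_le_sq_sum_of_nonneg (s := Finset.univ) (f := fun i => |v i|)
      (fun i _ => abs_nonneg _)
    simpa using this
  refine h1.trans ((Finset.sum_le_sum fun i _ => h i).trans ?_)
  simp

lemma sci_bound {ν : E → Set ℝ → ℝ} {m : Measure ℝ} (h : GoodMeasure m) {R : ℝ}
    (hm : ∀ y, ‖y‖ ≤ R → ∀ s t, s ≤ t → |ν y (Icc s t)| ≤ (m (Icc s t)).toReal)
    {y : ℝ → E} {a b c d L : ℝ} (hab : a ≠ b) (hac : a ∈ Icc c d) (hbc : b ∈ Icc c d)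
    (hy : ∀ t ∈ uIcc a b, ‖y t‖ ≤ R)
    (hL : IsSignedCurveIntegral ν y a b L) : |L| ≤ (m (Icc c d)).toReal := by
  rcases hL with ⟨h1, h2⟩ | ⟨h1, h2⟩
  · rw [uIcc_of_le h1] at hy
    exact (ci_bound h hm (lt_of_le_of_ne h1 hab) hy h2).trans (gm_mono h hac.1 hbc.2)
  · rw [uIcc_of_ge h1.le] at hy
    rw [← abs_neg]
    exact (ci_bound h hm h1 hy h2).trans (gm_mono h hbc.1 hac.2)

lemma sci_diff {ν : E → Set ℝ → ℝ} {l : Measure ℝ} (h : GoodMeasure l) {R : ℝ}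
    (hl : ∀ y z, ‖y‖ ≤ R → ‖z‖ ≤ R → ∀ s t, s ≤ t →
      |ν y (Icc s t) - ν z (Icc s t)| ≤ ‖y - z‖ * (l (Icc s t)).toReal)
    {y z : ℝ → E} {a b c d L L' D : ℝ} (hD0 : 0 ≤ D) (hab : a ≠ b)
    (hac : a ∈ Icc c d) (hbc : b ∈ Icc c d)
    (hy : ∀ t ∈ Icc c d, ‖y t‖ ≤ R)
    (hz : ∀ t ∈ Icc c d, ‖z t‖ ≤ R) (hD : ∀ t ∈ Icc c d, ‖y t - z t‖ ≤ D)
    (hL : IsSignedCurveIntegral ν y a b L) (hL' : IsSignedCurveIntegral ν z a b L') :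
    |L - L'| ≤ D * (l (Icc c d)).toReal := by
  rcases hL with ⟨h1, h2⟩ | ⟨h1, h2⟩ <;> rcases hL' with ⟨h1', h2'⟩ | ⟨h1', h2'⟩
  · have hs := Icc_subset_Icc hac.1 hbc.2
    exact (ci_diff h hl (lt_of_le_of_ne h1 hab) (fun t ht => hy t (hs ht))
      (fun t ht => hz t (hs ht)) (fun t ht => hD t (hs ht)) h2 h2').trans
      (mul_le_mul_of_nonneg_left (gm_mono h hac.1 hbc.2) hD0)
  · linarith
  · linarith
  · have hs := Icc_subset_Icc hbc.1 hac.2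
    rw [← abs_neg, show -(L - L') = -L - -L' by ring]
    exact (ci_diff h hl h1 (fun t ht => hy t (hs ht))
      (fun t ht => hz t (hs ht)) (fun t ht => hD t (hs ht)) h2 h2').trans
      (mul_le_mul_of_nonneg_left (gm_mono h hbc.1 hac.2) hD0)

lemma picard_step {N : ℕ} {ν : Fin N → EuclideanSpace ℝ (Fin N) → Set ℝ → ℝ}
    (hb : ∀ i y, IsBMeasure (ν i y)) {m l : Measure ℝ}
    (gm : GoodMeasure m) (gl : GoodMeasure l) {R : ℝ}
    (hm : ∀ i y, ‖y‖ ≤ R → ∀ s t, s ≤ t → |ν i y (Icc s t)| ≤ (m (Icc s t)).toReal)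
    (hl : ∀ i y z, ‖y‖ ≤ R → ‖z‖ ≤ R → ∀ s t, s ≤ t →
      |ν i y (Icc s t) - ν i z (Icc s t)| ≤ ‖y - z‖ * (l (Icc s t)).toReal)
    {c d : ℝ} (hcd : c < d) {y : ℝ → EuclideanSpace ℝ (Fin N)} (hy : ContinuousOn y (Icc c d))
    (hyR : ∀ t ∈ Icc c d, ‖y t‖ ≤ R) (t₀ : ℝ) (ht₀ : t₀ ∈ Icc c d)
    (y₀ : EuclideanSpace ℝ (Fin N)) :
    ∃ w : ℝ → EuclideanSpace ℝ (Fin N), w t₀ = y₀ ∧ ContinuousOn w (Icc c d) ∧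
      ∀ t ∈ Icc c d, ∀ i, IsSignedCurveIntegral (ν i) y t₀ t (w t i - y₀ i) := by
  have hex : ∀ i, ∃ Φ : ℝ → ℝ, ∀ a b, c ≤ a → b ≤ d → IsCurveIntegral (ν i) y a b (Φ b - Φ a) := by
    intro i
    obtain ⟨Φ, hΦ⟩ := exists_primitive (hb i) gm gl (hm i) (hl i) hcd hy hyR
    exact ⟨Φ, fun a b ha hb' => ci_of_primitive gl hy hΦ ha hb'⟩
  choose Φ hΦ using hex
  have hcont : ∀ i, ContinuousOn (Φ i) (Icc c d) := by
    intro i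
    rw [Metric.continuousOn_iff]
    intro t ht ε hε
    obtain ⟨δ, hδ, hsm⟩ := gm_small gm t hε
    refine ⟨δ, hδ, fun s hs hst => ?_⟩
    have bd : ∀ a b, a < b → a ∈ Icc c d → b ∈ Icc c d → t - δ ≤ a → b ≤ t + δ →
        |Φ i b - Φ i a| < ε := by
      intro a b hab ha hb' h1 h2
      refine lt_of_le_of_lt (ci_bound gm (hm i) hab (fun u hu => hyR u
        ⟨ha.1.trans hu.1, hu.2.trans hb'.2⟩) (hΦ i a b ha.1 hb'.2)) ?_
      exact (gm_mono gm h1 h2).trans_lt hsm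
    rw [Real.dist_eq, abs_lt] at hst
    rw [Real.dist_eq]
    rcases lt_trichotomy s t with h | h | h
    · rw [abs_sub_comm]
      exact bd s t h hs ht (by linarith [hst.1]) (by linarith)
    · subst h; simpa using hε
    · exact bd t s h ht hs (by linarith [hst.1]) (by linarith [hst.2])
  refine ⟨fun t => WithLp.toLp 2 (fun i => y₀ i + (Φ i t - Φ i t₀)), ?_, ?_, ?_⟩
  · ext i; simp
  · refine (PiLp.continuous_toLp 2 _).comp_continuousOn ?_
    rw [continuousOn_pi]
    intro i
    exact continuousOn_const.add ((hcont i).sub continuousOn_const)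
  · intro t ht i
    simp only [add_sub_cancel_left]
    rcases le_or_gt t₀ t with h | h
    · exact Or.inl ⟨h, hΦ i t₀ t ht₀.1 ht.2⟩
    · refine Or.inr ⟨h, ?_⟩
      rw [neg_sub]
      exact hΦ i t t₀ ht.1 ht₀.2

lemma stay_in_ball {F : Type*} [NormedAddCommGroup F] {z : ℝ → F} {c d t₀ : ℝ}
    (ht₀ : t₀ ∈ Icc c d) (hz : ContinuousOn z (Icc c d))
    (H : ∀ t ∈ Icc c d, t₀ ≠ t → (∀ s ∈ uIcc t₀ t, ‖z s - z t₀‖ ≤ 1) → ‖z t - z t₀‖ < 1) :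
    ∀ t ∈ Icc c d, ‖z t - z t₀‖ ≤ 1 := by
  by_contra hcon
  push Not at hcon
  obtain ⟨t₁, ht₁, h1⟩ := hcon
  have hf : ContinuousOn (fun t => ‖z t - z t₀‖) (Icc c d) := (hz.sub continuousOn_const).norm
  have sub : ∀ t ∈ Icc c d, uIcc t₀ t ⊆ Icc c d := fun t ht => by
    rw [← uIcc_of_le (ht₀.1.trans ht₀.2)]
    rw [← uIcc_of_le (ht₀.1.trans ht₀.2)] at ht
    exact uIcc_subset_uIcc (by rw [uIcc_of_le (ht₀.1.trans ht₀.2)]; exact ht₀) ht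
  have ivt : ∀ t ∈ Icc c d, 1 < ‖z t - z t₀‖ → ∃ s ∈ uIcc t₀ t, ‖z s - z t₀‖ = 1 := by
    intro t ht h
    have := intermediate_value_uIcc (hf.mono (sub t ht))
    have hmem : (1 : ℝ) ∈ uIcc ‖z t₀ - z t₀‖ ‖z t - z t₀‖ := by
      rw [sub_self, norm_zero, uIcc_of_le (norm_nonneg _)]
      exact ⟨zero_le_one, h.le⟩
    obtain ⟨s, hs, hs'⟩ := this hmem
    exact ⟨s, hs, hs'⟩
  have hB : IsCompact (Icc c d ∩ (fun t => ‖z t - z t₀‖) ⁻¹' {1}) :=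
    isCompact_Icc.of_isClosed_subset (hf.preimage_isClosed_of_isClosed isClosed_Icc
      isClosed_singleton) inter_subset_left
  have hne : (Icc c d ∩ (fun t => ‖z t - z t₀‖) ⁻¹' {1}).Nonempty := by
    obtain ⟨s, hs, hs'⟩ := ivt t₁ ht₁ h1
    exact ⟨s, sub t₁ ht₁ hs, hs'⟩
  obtain ⟨t, ⟨htm, ht1⟩, hmin⟩ := hB.exists_isMinOn hne
    (f := fun s => |s - t₀|) (by fun_prop)
  have ht1 : ‖z t - z t₀‖ = 1 := ht1
  have hlt := H t htm (by rintro rfl; simp at ht1) ?_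
  · linarith
  intro s hs
  by_contra! hgt
  have hsm := sub t htm hs
  obtain ⟨u, hu, hu1⟩ := ivt s hsm hgt
  have h2 : |t - t₀| ≤ |u - t₀| := hmin ⟨sub s hsm hu, hu1⟩
  have h3 : |u - t₀| ≤ |s - t₀| := abs_sub_left_of_mem_uIcc hu
  have hst : s = t := by
    have h4 := h2.trans h3
    rcases le_total t₀ t with h | h
    · rw [uIcc_of_le h] at hs
      rw [abs_of_nonneg (by linarith), abs_of_nonneg (by linarith [hs.1])] at h4
      linarith [hs.2]
    · rw [uIcc_of_ge h] at hs
      rw [abs_of_nonpos (by linarith), abs_of_nonpos (by linarith [hs.2])] at h4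
      linarith [hs.1]
  rw [hst] at hgt
  linarith

theorem stmt15 {N : ℕ} (νbar : Fin N → EuclideanSpace ℝ (Fin N) → Set ℝ → ℝ)
    (mB lB : ℕ → Measure ℝ) (hν : IsNDimParamBMeasure νbar mB lB)
    (t₀ : ℝ) (y₀ : EuclideanSpace ℝ (Fin N)) :
    ∃ δ > (0 : ℝ), ∃ y : ℝ → EuclideanSpace ℝ (Fin N),
      IsSolutionOn νbar t₀ y₀ (Set.Icc (t₀ - δ) (t₀ + δ)) y ∧
      ∀ z : ℝ → EuclideanSpace ℝ (Fin N),
        IsSolutionOn νbar t₀ y₀ (Set.Icc (t₀ - δ) (t₀ + δ)) z →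
        Set.EqOn z y (Set.Icc (t₀ - δ) (t₀ + δ)) := by
  obtain ⟨hb, hbd⟩ := hν
  obtain ⟨j, hj⟩ := exists_nat_ge (‖y₀‖ + 1)
  have hj1 : 1 ≤ j := by
    have : (1 : ℝ) ≤ j := by linarith [norm_nonneg y₀]
    exact_mod_cast this
  obtain ⟨gm, gl, hTV, hDiff⟩ := hbd j hj1
  have part1 : ∀ s t : ℝ, IsBorelPartition (Icc s t) (fun _ : Fin 1 => Icc s t) := fun s t =>
    ⟨fun _ => measurableSet_Icc, fun a b hab => absurd (Subsingleton.elim a b) hab,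
      iUnion_const _⟩
  have hm : ∀ i y, ‖y‖ ≤ (j : ℝ) → ∀ s t, s ≤ t →
      |νbar i y (Icc s t)| ≤ (mB j (Icc s t)).toReal := by
    intro i y hy s t _
    simpa using hTV i y hy _ (Metric.isBounded_Icc s t) measurableSet_Icc 1 _ (part1 s t)
  have hl : ∀ i y z, ‖y‖ ≤ (j : ℝ) → ‖z‖ ≤ (j : ℝ) → ∀ s t, s ≤ t →
      |νbar i y (Icc s t) - νbar i z (Icc s t)| ≤ ‖y - z‖ * (lB j (Icc s t)).toReal := by
    intro i y z hy hz s t _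
    simpa using hDiff i y z hy hz _ (Metric.isBounded_Icc s t) measurableSet_Icc 1 _ (part1 s t)
  have hN : (0 : ℝ) < (N : ℝ) + 1 := by positivity
  obtain ⟨δ₁, hδ₁, hs₁⟩ := gm_small gm t₀ (ε := 1 / ((N : ℝ) + 1)) (by positivity)
  obtain ⟨δ₂, hδ₂, hs₂⟩ := gm_small gl t₀ (ε := 1 / 2 / ((N : ℝ) + 1)) (by positivity)
  obtain ⟨δ, hδ, hd₁, hd₂⟩ : ∃ δ > 0, δ ≤ δ₁ ∧ δ ≤ δ₂ :=
    ⟨min δ₁ δ₂, lt_min hδ₁ hδ₂, min_le_left _ _, min_le_right _ _⟩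
  refine ⟨δ, hδ, ?_⟩
  have hsm : (mB j (Icc (t₀ - δ) (t₀ + δ))).toReal < 1 / ((N : ℝ) + 1) :=
    (gm_mono gm (by linarith) (by linarith)).trans_lt hs₁
  have hsl : (lB j (Icc (t₀ - δ) (t₀ + δ))).toReal < 1 / 2 / ((N : ℝ) + 1) :=
    (gm_mono gl (by linarith) (by linarith)).trans_lt hs₂
  have hcd : t₀ - δ < t₀ + δ := by linarith
  have ht₀ : t₀ ∈ Icc (t₀ - δ) (t₀ + δ) := ⟨by linarith, by linarith⟩
  generalize t₀ - δ = c at *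
  generalize t₀ + δ = d at *
  have hm0 : (0 : ℝ) ≤ (mB j (Icc c d)).toReal := ENNReal.toReal_nonneg
  have hl0 : (0 : ℝ) ≤ (lB j (Icc c d)).toReal := ENNReal.toReal_nonneg
  rw [lt_div_iff₀ hN] at hsm hsl
  have hNm : (N : ℝ) * (mB j (Icc c d)).toReal < 1 := by linarith
  have hNl : (N : ℝ) * (lB j (Icc c d)).toReal ≤ 1 / 2 := by linarith
  have hball : ∀ x : EuclideanSpace ℝ (Fin N), ‖x - y₀‖ ≤ 1 → ‖x‖ ≤ (j : ℝ) := by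
    intro x hx
    have := norm_sub_norm_le x y₀
    linarith
  -- bound for images
  have bnd : ∀ y w : ℝ → EuclideanSpace ℝ (Fin N), w t₀ = y₀ →
      ∀ t ∈ Icc c d, t₀ ≠ t → (∀ s ∈ uIcc t₀ t, ‖y s - y₀‖ ≤ 1) →
      (∀ i, IsSignedCurveIntegral (νbar i) y t₀ t (w t i - y₀ i)) → ‖w t - y₀‖ < 1 := by
    intro y w _ t ht hne hy hw
    refine lt_of_le_of_lt (norm_le_coord _ fun i => ?_) hNm
    rw [PiLp.sub_apply]
    exact sci_bound gm (hm i) hne ht₀ ht (fun s hs => hball _ (hy s hs)) (hw i)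
  -- Lipschitz bound
  have lip : ∀ y z w v : ℝ → EuclideanSpace ℝ (Fin N), ∀ D, 0 ≤ D → w t₀ = y₀ → v t₀ = y₀ →
      (∀ t ∈ Icc c d, ‖y t - y₀‖ ≤ 1) → (∀ t ∈ Icc c d, ‖z t - y₀‖ ≤ 1) →
      (∀ t ∈ Icc c d, ‖y t - z t‖ ≤ D) →
      (∀ t ∈ Icc c d, ∀ i, IsSignedCurveIntegral (νbar i) y t₀ t (w t i - y₀ i)) →
      (∀ t ∈ Icc c d, ∀ i, IsSignedCurveIntegral (νbar i) z t₀ t (v t i - y₀ i)) →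
      ∀ t ∈ Icc c d, ‖w t - v t‖ ≤ 1 / 2 * D := by
    intro y z w v D hD0 hw0 hv0 hy hz hD hw hv t ht
    rcases eq_or_ne t₀ t with rfl | hne
    · rw [hw0, hv0, sub_self, norm_zero]; positivity
    have : ‖w t - v t‖ ≤ N * (D * (lB j (Icc c d)).toReal) := by
      refine norm_le_coord _ fun i => ?_
      rw [PiLp.sub_apply, show w t i - v t i = (w t i - y₀ i) - (v t i - y₀ i) by ring]
      exact sci_diff gl (hl i) hD0 hne ht₀ ht (fun s hs => hball _ (hy s hs))
        (fun s hs => hball _ (hz s hs)) hD (hw t ht i) (hv t ht i)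
    refine this.trans ?_
    nlinarith
  -- the complete metric space of curves
  let X := Metric.closedBall (ContinuousMap.const (Icc c d) y₀) (1 : ℝ)
  have : CompleteSpace X := Metric.isClosed_closedBall.completeSpace_coe
  have : Nonempty X := ⟨⟨ContinuousMap.const _ y₀, by simp [X]⟩⟩
  let e : X → ℝ → EuclideanSpace ℝ (Fin N) := fun f => IccExtend hcd.le f.1
  have he : ∀ (f : X) (t : ℝ) (ht : t ∈ Icc c d), e f t = f.1 ⟨t, ht⟩ := fun f t ht =>
    IccExtend_of_mem hcd.le _ ht
  have hec : ∀ f : X, ContinuousOn (e f) (Icc c d) := fun f =>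
    (f.1.continuous.Icc_extend' (h := hcd.le)).continuousOn
  have heb : ∀ (f : X), ∀ t ∈ Icc c d, ‖e f t - y₀‖ ≤ 1 := by
    intro f t ht
    rw [he f t ht, ← dist_eq_norm]
    have h1 := f.2
    rw [Metric.mem_closedBall] at h1
    exact (ContinuousMap.dist_apply_le_dist (g := ContinuousMap.const (Icc c d) y₀)
      ⟨t, ht⟩).trans h1
  have hstep := fun f : X => picard_step hb gm gl hm hl hcd (hec f)
    (fun t ht => hball _ (heb f t ht)) t₀ ht₀ y₀
  choose W hW0 hWc hW using hstep
  have hWb : ∀ f, ∀ t ∈ Icc c d, ‖W f t - y₀‖ ≤ 1 := by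
    intro f t ht
    rcases eq_or_ne t₀ t with rfl | hne
    · rw [hW0, sub_self, norm_zero]; exact zero_le_one
    refine (bnd (e f) (W f) (hW0 f) t ht hne (fun s hs => heb f s ?_) (hW f t ht)).le
    rw [← uIcc_of_le hcd.le] at ht ht₀ ⊢
    exact uIcc_subset_uIcc ht₀ ht hs
  let T : X → X := fun f => ⟨⟨(Icc c d).domRestrict (W f), (hWc f).domRestrict⟩, by
    rw [Metric.mem_closedBall, ContinuousMap.dist_le zero_le_one]
    intro t
    rw [dist_eq_norm]
    exact hWb f t t.2⟩
  have hT : ContractingWith (1 / 2) T := by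
    refine ⟨by norm_num, LipschitzWith.of_dist_le_mul fun f g => ?_⟩
    rw [Subtype.dist_eq, ContinuousMap.dist_le (by positivity)]
    intro t
    rw [dist_eq_norm]
    have := lip (e f) (e g) (W f) (W g) (dist f g) dist_nonneg (hW0 f) (hW0 g) (heb f) (heb g)
      (fun s hs => by
        rw [he f s hs, he g s hs, ← dist_eq_norm]
        exact ContinuousMap.dist_apply_le_dist _) (hW f) (hW g) t t.2
    have h2 : ((1 / 2 : NNReal) : ℝ) = 1 / 2 := by simp
    rw [h2]
    exact this
  obtain ⟨f, hf⟩ : ∃ f, T f = f := ⟨_, hT.fixedPoint_isFixedPt⟩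
  have hfe : ∀ t ∈ Icc c d, W f t = e f t := by
    intro t ht
    rw [he f t ht]
    exact congrArg (fun g : X => g.1 ⟨t, ht⟩) hf
  have hsol : IsSolutionOn νbar t₀ y₀ (Icc c d) (e f) := by
    refine ⟨ht₀, by rw [← hfe t₀ ht₀, hW0], hec f, fun t ht i => ?_⟩
    rw [← hfe t ht]
    exact hW f t ht i
  refine ⟨e f, hsol, ?_⟩
  rintro z ⟨-, hz0, hzc, hz⟩
  have hzb : ∀ t ∈ Icc c d, ‖z t - y₀‖ ≤ 1 := by
    have := stay_in_ball ht₀ hzc (fun t ht hne h => by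
      rw [hz0] at h ⊢
      exact bnd z z hz0 t ht hne h (hz t ht))
    rwa [hz0] at this
  obtain ⟨t', ht', hmax⟩ := isCompact_Icc.exists_isMaxOn (nonempty_Icc.mpr hcd.le)
    ((hzc.sub (hec f)).norm)
  have hl2 := lip z (e f) z (e f) ‖z t' - e f t'‖ (norm_nonneg _) hz0 hsol.2.1 hzb (heb f)
    (fun t ht => hmax ht) hz hsol.2.2.2
  have h0 : ‖z t' - e f t'‖ = 0 := by
    have := hl2 t' ht'
    linarith [norm_nonneg (z t' - e f t')]
  intro t ht
  have h1 : ‖z t - e f t‖ ≤ ‖z t' - e f t'‖ := hmax ht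
  rw [h0] at h1
  exact sub_eq_zero.mp (norm_le_zero_iff.mp h1)
end
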